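/- arXiv:2508.12113 — 2 statements merged into one kernel-verified Lean document; each statement's English description precedes it below -/
import Mathlib

section
/- Let K have characteristic zero, let A be a set of d ≥ 2 distinct hyperplanes in ℙⁿ, and let H = V(x) be a hyperplane not in A (x a linear form) that contains at most one subspace of S(A). Then, for a general linear form ℓ, the general residual of A ∪ {H} is a basic double link of r_A: r_{A∪{H}} = x·r_A + (p), where x, p is a regular sequence, deg p = |A ∩ H| (the number of distinct codimension-two subspaces H′∩H with H′ ∈ A), and p can be taken as follows: p = f_A if H contains no subspace of S(A); and p = ℓ_Q·h if S(A) ∩ H = {Q}, where h is the product of the linear divisors of f_A defining hyperplanes not containing Q and ℓ_Q is a linear form defining the hyperplane spanned by Q and the dual point ℓ∨. -/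
open MvPolynomial

/-- The derivative `∂f/∂ℓ = Σᵢ aᵢ·∂f/∂xᵢ` of `f` in the direction of the linear form
`ℓ = Σᵢ aᵢxᵢ` with coefficient vector `a`. -/
noncomputable def lderiv {K : Type*} [CommRing K] {m : ℕ} (a : Fin m → K)
    (f : MvPolynomial (Fin m) K) : MvPolynomial (Fin m) K :=
  ∑ i, a i • pderiv i f

/-- The Jacobian ideal of `f`, generated by all partial derivatives of `f`. -/
noncomputable def jacobianIdeal {K : Type*} [CommRing K] {m : ℕ}
    (f : MvPolynomial (Fin m) K) : Ideal (MvPolynomial (Fin m) K) :=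
  Ideal.span (Set.range fun i => pderiv i f)

/-- The general residual of the arrangement with defining polynomial `f` with respect to
the linear form with coefficient vector `a`: `r = (f, ∂f/∂ℓ) : Jac(f)`. -/
noncomputable def genResidual {K : Type*} [CommRing K] {m : ℕ} (a : Fin m → K)
    (f : MvPolynomial (Fin m) K) : Ideal (MvPolynomial (Fin m) K) :=
  (Ideal.span {f, lderiv a f}).colon (jacobianIdeal f)

/-- The top support `S(A)` of the singular locus of the arrangement defined by the linear
forms `L i`: the (ideals `I_P` of the) codimension-two subspaces cut out by two distinct
hyperplanes of the arrangement. -/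
def singSupp {K : Type*} [CommRing K] {m d : ℕ} (L : Fin d → MvPolynomial (Fin m) K) :
    Set (Ideal (MvPolynomial (Fin m) K)) :=
  {I | ∃ i j : Fin d, i ≠ j ∧ I = Ideal.span {L i, L j}}

/-!
A polynomial `s` lies in the general residual of `f` exactly when for every `j` some derivation
`u·∂/∂ℓ - s·∂/∂xⱼ` is logarithmic along `f`, that is, maps `f` into `(f)`. A derivation is
logarithmic along a product of coprime factors if and only if it is so along each factor. Hence the
residual of `A ∪ {H}` contains `x·r_A`, and conversely `x·s` lies in it only if `s ∈ r_A`: being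
logarithmic along `x` forces `x ∣ u`, because `∂x/∂ℓ = x(ℓ∨)` is a nonzero constant. The basic
double link formula therefore holds for any `p` in the residual such that the residual lies in
`(x, p)`.

Choose hyperplanes `L i`, `i ∈ t`, of `A`, one through each codimension-two subspace of `A ∩ H`. The
residual of the two hyperplanes `x·L i` lies in `(x, L i)`, so that of `A ∪ {H}` lies in
`⋂ (x, L i) = (x, ∏ L i)`, and it remains to find `p` in the residual with `p ≡ ∏ L i` modulo `x` up
to a unit. If no two hyperplanes of `A` meet on `H`, then `p = f_A` works. If those containing `Q`
do, then the form `ℓ_Q` lies in the residual of the pencil they form together with `H`, and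
multiplying by the remaining forms gives `p`.
-/

section LogarithmicDerivation

variable {k R : Type*} [CommRing k] [CommRing R] [Algebra k R] (θ : Derivation k R R)

theorem mul_dvd_derivation_mul {f g : R} (hf : f ∣ θ f) (hg : g ∣ θ g) : f * g ∣ θ (f * g) := by
  rw [Derivation.leibniz, smul_eq_mul, smul_eq_mul, mul_comm g]
  exact dvd_add (mul_dvd_mul_left f hg) (mul_dvd_mul_right hf g)

theorem prod_dvd_derivation_prod {ι : Type*} {t : Finset ι} {f : ι → R}
    (h : ∀ i ∈ t, f i ∣ θ (f i)) : ∏ i ∈ t, f i ∣ θ (∏ i ∈ t, f i) :=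
  Finset.prod_induction f (fun g => g ∣ θ g) (fun _ _ => mul_dvd_derivation_mul θ)
    (by simp) h

theorem dvd_derivation_of_mul_dvd_derivation_mul [DecompositionMonoid R] {f g : R}
    (hfg : IsRelPrime f g) (h : f * g ∣ θ (f * g)) : f ∣ θ f := by
  rw [Derivation.leibniz, smul_eq_mul, smul_eq_mul] at h
  exact hfg.dvd_of_dvd_mul_left
    ((dvd_add_right (dvd_mul_right f (θ g))).mp ((dvd_mul_right f g).trans h))

end LogarithmicDerivation

section GeneralResidual

variable {K : Type*} [CommRing K] {m : ℕ}

theorem sum_smul_pderiv_apply (a : Fin m → K) (f : MvPolynomial (Fin m) K) :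
    (∑ i, a i • pderiv i : Derivation K _ (MvPolynomial (Fin m) K)) f = lderiv a f := by
  rw [lderiv, ← Derivation.coeFnAddMonoidHom_apply, map_sum, Finset.sum_apply]
  rfl

/-- The derivation `u • ∂/∂ℓ - s • ∂/∂xⱼ`. The polynomial `s` lies in the general residual of `f`
precisely when, for each `j`, some `u` makes this derivation logarithmic along `f`. -/
noncomputable def residualDerivation (a : Fin m → K) (j : Fin m) (u s : MvPolynomial (Fin m) K) :
    Derivation K (MvPolynomial (Fin m) K) (MvPolynomial (Fin m) K) :=
  u • ∑ i, a i • pderiv i - s • pderiv j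

theorem residualDerivation_apply (a : Fin m → K) (j : Fin m) (u s f : MvPolynomial (Fin m) K) :
    residualDerivation a j u s f = u * lderiv a f - s * pderiv j f := by
  simp [residualDerivation, sum_smul_pderiv_apply]

theorem residualDerivation_mul_mul (a : Fin m → K) (j : Fin m)
    (g u s f : MvPolynomial (Fin m) K) :
    residualDerivation a j (g * u) (g * s) f = g * residualDerivation a j u s f := by
  simp only [residualDerivation_apply]
  ring

variable {a : Fin m → K} {f g p s x : MvPolynomial (Fin m) K}

theorem mem_genResidual_iff :
    s ∈ genResidual a f ↔ ∀ j, ∃ u, f ∣ residualDerivation a j u s f := by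
  rw [genResidual, jacobianIdeal, Ideal.span, Ideal.span, Submodule.colon_span,
    Submodule.mem_colon, Set.forall_mem_range]
  refine forall_congr' fun j => ?_
  rw [smul_eq_mul, ← Ideal.span, Ideal.mem_span_pair]
  simp only [residualDerivation_apply]
  constructor
  · rintro ⟨v, u, h⟩
    exact ⟨u, -v, by linear_combination h⟩
  · rintro ⟨u, v, h⟩
    exact ⟨-v, u, by linear_combination h⟩

theorem mul_mem_genResidual_mul (hs : s ∈ genResidual a f) : g * s ∈ genResidual a (g * f) := by
  rw [mem_genResidual_iff] at hs ⊢
  intro j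
  obtain ⟨u, hu⟩ := hs j
  refine ⟨g * u, mul_dvd_derivation_mul _ ?_ ?_⟩ <;> rw [residualDerivation_mul_mul]
  · exact dvd_mul_right g _
  · exact hu.mul_left g

theorem genResidual_eq_top (hf : IsUnit (lderiv a f)) : genResidual a f = ⊤ := by
  rw [Ideal.eq_top_iff_one, mem_genResidual_iff]
  intro j
  obtain ⟨v, hv⟩ := hf.exists_left_inv
  refine ⟨pderiv j f * v, 0, ?_⟩
  rw [residualDerivation_apply]
  linear_combination pderiv j f * hv

variable [DecompositionMonoid (MvPolynomial (Fin m) K)]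

theorem genResidual_mul_le_left (hfg : IsRelPrime f g) :
    genResidual a (f * g) ≤ genResidual a f := by
  intro s hs
  rw [mem_genResidual_iff] at hs ⊢
  exact fun j => (hs j).imp fun _ => dvd_derivation_of_mul_dvd_derivation_mul _ hfg

theorem mem_genResidual_of_mul_mem (hxf : IsRelPrime x f) (hx : IsUnit (lderiv a x))
    (hs : x * s ∈ genResidual a (x * f)) : s ∈ genResidual a f := by
  rw [mem_genResidual_iff] at hs ⊢
  intro j
  obtain ⟨u, hu⟩ := hs j
  have hux : x ∣ residualDerivation a j u (x * s) x :=
    dvd_derivation_of_mul_dvd_derivation_mul _ hxf hu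
  have huf : f ∣ residualDerivation a j u (x * s) f :=
    dvd_derivation_of_mul_dvd_derivation_mul _ hxf.symm (by rwa [mul_comm f x])
  rw [residualDerivation_apply, mul_assoc, dvd_sub_left (dvd_mul_right x _),
    hx.dvd_mul_right] at hux
  obtain ⟨v, rfl⟩ := hux
  rw [residualDerivation_mul_mul] at huf
  exact ⟨v, hxf.symm.dvd_of_dvd_mul_left huf⟩

theorem genResidual_mul_eq_sup (hxf : IsRelPrime x f) (hx : IsUnit (lderiv a x))
    (hp : p ∈ genResidual a (x * f)) (hle : genResidual a (x * f) ≤ Ideal.span {x, p}) :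
    genResidual a (x * f) = Ideal.span {x} * genResidual a f ⊔ Ideal.span {p} := by
  apply le_antisymm
  · intro s hs
    obtain ⟨z, w, rfl⟩ := Ideal.mem_span_pair.mp (hle hs)
    have hwp : w * p ∈ Ideal.span {p} := Ideal.mul_mem_left _ w (Ideal.mem_span_singleton_self p)
    have hxz : x * z ∈ genResidual a (x * f) := by
      rw [mul_comm x z]
      exact (Ideal.add_mem_iff_left _ (Ideal.mul_mem_left _ w hp)).mp hs
    rw [mul_comm z]
    exact Submodule.add_mem_sup
      (Ideal.mul_mem_mul (Ideal.mem_span_singleton_self x) (mem_genResidual_of_mul_mem hxf hx hxz))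
      hwp
  · rw [sup_le_iff, Ideal.span_singleton_mul_le_iff, Ideal.span_singleton_le_iff_mem]
    exact ⟨fun _ => mul_mem_genResidual_mul, hp⟩

end GeneralResidual

section LinearForm

section Semiring

variable {σ K : Type*} [CommSemiring K] {p u v : MvPolynomial σ K}

theorem homogeneousComponent_one_mul (f : MvPolynomial σ K) (hp : p.IsHomogeneous 1) :
    homogeneousComponent 1 (f * p) = constantCoeff f • p := by
  classical
  induction f using MvPolynomial.induction_on' with
  | monomial e c =>
    rw [homogeneousComponent_of_mem ((isHomogeneous_monomial c rfl).mul hp)]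
    by_cases he : e = 0
    · simp [he, smul_eq_C_mul]
    · rw [constantCoeff_eq, coeff_monomial, if_neg he, zero_smul, if_neg]
      simpa [Finsupp.degree_eq_zero_iff] using he
  | add f g hf hg => rw [add_mul, map_add, hf, hg, map_add, add_smul]

theorem mem_span_of_mem_ideal_span {S : Set (MvPolynomial σ K)} (hS : ∀ f ∈ S, f.IsHomogeneous 1)
    (hp : p.IsHomogeneous 1) (h : p ∈ Ideal.span S) : p ∈ Submodule.span K S := by
  suffices ∀ g, homogeneousComponent 1 (g * p) ∈ Submodule.span K S by
    simpa [homogeneousComponent_eq_self hp] using this 1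
  refine Submodule.span_induction (p := fun f _ => ∀ g, homogeneousComponent 1 (g * f) ∈ _)
    (fun f hf g => ?_) (by simp) (fun f₁ f₂ _ _ h₁ h₂ g => ?_) (fun r f _ hf g => ?_) h
  · rw [homogeneousComponent_one_mul g (hS f hf)]
    exact Submodule.smul_mem _ _ (Submodule.subset_span hf)
  · rw [mul_add, map_add]
    exact add_mem (h₁ g) (h₂ g)
  · rw [smul_eq_mul, ← mul_assoc]
    exact hf (g * r)

theorem mem_span_pair_of_mem_ideal_span_pair (hu : u.IsHomogeneous 1) (hv : v.IsHomogeneous 1)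
    (hp : p.IsHomogeneous 1) (h : p ∈ Ideal.span {u, v}) : p ∈ Submodule.span K {u, v} :=
  mem_span_of_mem_ideal_span (by simp [hu, hv]) hp h

theorem isHomogeneous_prod_card {ι : Type*} {L : ι → MvPolynomial σ K} (t : Finset ι)
    (hL : ∀ i ∈ t, (L i).IsHomogeneous 1) : (∏ i ∈ t, L i).IsHomogeneous t.card := by
  simpa using IsHomogeneous.prod t L (fun _ => 1) hL

end Semiring

variable {σ K : Type*} [Field K] {p q u v x : MvPolynomial σ K}

theorem span_pair_eq_of_linearIndependent {V : Type*} [AddCommGroup V] [Module K V]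
    {p q u v : V} (hpq : LinearIndependent K ![p, q]) (hp : p ∈ Submodule.span K {u, v})
    (hq : q ∈ Submodule.span K {u, v}) : Submodule.span K {p, q} = Submodule.span K {u, v} := by
  have hfin : FiniteDimensional K (Submodule.span K {u, v}) :=
    FiniteDimensional.span_of_finite K (Set.toFinite _)
  refine Submodule.eq_of_le_of_finrank_le (Submodule.span_le.mpr (Set.pair_subset hp hq)) ?_
  have huv := finrank_range_le_card (R := K) ![u, v]
  have hpq := finrank_span_eq_card hpq
  rw [Matrix.range_cons_cons_empty] at huv hpq
  exact huv.trans hpq.ge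

theorem ideal_span_pair_eq_of_linearIndependent (hu : u.IsHomogeneous 1) (hv : v.IsHomogeneous 1)
    (hp : p.IsHomogeneous 1) (hq : q.IsHomogeneous 1) (hpq : LinearIndependent K ![p, q])
    (hpuv : p ∈ Ideal.span {u, v}) (hquv : q ∈ Ideal.span {u, v}) :
    Ideal.span {p, q} = Ideal.span {u, v} := by
  have hspan : Submodule.span K {p, q} = Submodule.span K {u, v} :=
    span_pair_eq_of_linearIndependent hpq (mem_span_pair_of_mem_ideal_span_pair hu hv hp hpuv)
      (mem_span_pair_of_mem_ideal_span_pair hu hv hq hquv)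
  rw [Ideal.span, Ideal.span, ← Submodule.span_span_of_tower K, hspan,
    Submodule.span_span_of_tower]

theorem irreducible_of_isHomogeneous_one (hp : p.IsHomogeneous 1) (hp0 : p ≠ 0) :
    Irreducible p := by
  refine irreducible_of_totalDegree_eq_one (hp.totalDegree hp0) fun c hc => ?_
  obtain ⟨d, hd⟩ := ne_zero_iff.mp hp0
  exact isUnit_of_dvd_unit (hc d) hd.isUnit

theorem isRelPrime_of_linearIndependent (hp : p.IsHomogeneous 1) (hq : q.IsHomogeneous 1)
    (hpq : LinearIndependent K ![p, q]) : IsRelPrime p q := by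
  have hp0 : p ≠ 0 := hpq.ne_zero 0
  rw [(irreducible_of_isHomogeneous_one hp hp0).isRelPrime_iff_not_dvd]
  intro hdvd
  obtain ⟨c, hc⟩ := Submodule.mem_span_singleton.mp
    (mem_span_of_mem_ideal_span (by simpa) hq (Ideal.mem_span_singleton.mpr hdvd))
  exact (LinearIndependent.pair_iff' hp0).mp hpq c hc

theorem exists_pderiv_eq_C [Finite σ] (hp : p.IsHomogeneous 1) (hp0 : p ≠ 0) :
    ∃ j, ∃ c : K, c ≠ 0 ∧ pderiv j p = C c := by
  have := Fintype.ofFinite σ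
  have hconst : ∀ j, pderiv j p = C (coeff 0 (pderiv j p)) := fun j =>
    totalDegree_eq_zero_iff_eq_C.mp
      ((totalDegree_zero_iff_isHomogeneous σ).mpr (hp.pderiv (i := j)))
  by_contra! hzero
  refine hp0 ?_
  rw [← one_smul ℕ p, ← hp.sum_X_mul_pderiv]
  refine Finset.sum_eq_zero fun j _ => ?_
  have hj : coeff 0 (pderiv j p) = 0 := by_contra fun h => hzero j _ h (hconst j)
  rw [hconst j, hj, map_zero, mul_zero]

-- If `∂x/∂xⱼ = c ≠ 0`, the substitution `xⱼ ↦ xⱼ - c⁻¹x` fixes the other variables and kills `x`.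
theorem exists_linear_retraction [Finite σ] (hx : x.IsHomogeneous 1) (hx0 : x ≠ 0) :
    ∃ φ : MvPolynomial σ K →ₐ[K] MvPolynomial σ K, φ x = 0 ∧ (∀ f, x ∣ f - φ f) ∧
      ∀ f, f.IsHomogeneous 1 → (φ f).IsHomogeneous 1 := by
  classical
  obtain ⟨j, c, hc, hj⟩ := exists_pderiv_eq_C hx hx0
  let y : σ → MvPolynomial σ K := fun i => X i - C c⁻¹ * pderiv j (X i) * x
  have hlin : ∀ f, f.IsHomogeneous 1 → aeval y f = f - C c⁻¹ * pderiv j f * x := by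
    intro f hf
    rw [← mem_homogeneousSubmodule, homogeneousSubmodule_one_eq_span_X] at hf
    induction hf using Submodule.span_induction with
    | mem f hf => obtain ⟨i, rfl⟩ := hf; simp only [aeval_X, y]
    | zero => simp only [map_zero, mul_zero, zero_mul, sub_zero]
    | add f g _ _ hf hg => rw [map_add, map_add, hf, hg]; ring
    | smul r f _ hf => rw [map_smul, Derivation.map_smul, hf]; simp only [smul_eq_C_mul]; ring
  refine ⟨aeval y, ?_, fun f => ?_, fun f hf => ?_⟩
  · rw [hlin x hx, hj, ← C_mul, inv_mul_cancel₀ hc, C_1, one_mul, sub_self]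
  · induction f using MvPolynomial.induction_on with
    | C r => simp
    | add f g hf hg =>
      rw [map_add, add_sub_add_comm]
      exact dvd_add hf hg
    | mul_X f i hf =>
      have hXi : x ∣ X i - y i := by simp [y]
      rw [map_mul, aeval_X]
      exact dvd_mul_sub_mul hf hXi
  · rw [hlin f hf]
    simpa using hf.sub (((isHomogeneous_C σ c⁻¹).mul (hf.pderiv (i := j))).mul hx)

theorem mem_span_pair_iff_map_dvd_map {R : Type*} [CommRing R] {φ : R →+* R} {x : R}
    (hx : φ x = 0) (hφ : ∀ f, x ∣ f - φ f) {s f : R} : s ∈ Ideal.span {x, f} ↔ φ f ∣ φ s := by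
  constructor
  · intro hs
    obtain ⟨r, t, rfl⟩ := Ideal.mem_span_pair.mp hs
    simp [hx]
  · rintro ⟨t, ht⟩
    obtain ⟨r, hr⟩ := hφ s
    obtain ⟨r', hr'⟩ := hφ f
    exact Ideal.mem_span_pair.mpr ⟨r - t * r', t, by linear_combination -hr + t * hr' - ht⟩

theorem mem_span_pair_prod [Finite σ] {ι : Type*} {t : Finset ι} {L : ι → MvPolynomial σ K}
    {s : MvPolynomial σ K} (hx : x.IsHomogeneous 1) (hx0 : x ≠ 0)
    (hL : ∀ i ∈ t, (L i).IsHomogeneous 1)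
    (hdistinct : (t : Set ι).Pairwise fun i j => L j ∉ Ideal.span {x, L i})
    (hs : ∀ i ∈ t, s ∈ Ideal.span {x, L i}) : s ∈ Ideal.span {x, ∏ i ∈ t, L i} := by
  obtain ⟨φ, hφx, hφ, hφhom⟩ := exists_linear_retraction hx hx0
  have hmem {f g : MvPolynomial σ K} : g ∈ Ideal.span {x, f} ↔ φ f ∣ φ g :=
    mem_span_pair_iff_map_dvd_map (φ := (φ : MvPolynomial σ K →+* MvPolynomial σ K)) hφx hφ
  simp only [hmem] at hs hdistinct ⊢
  rw [map_prod]
  refine Finset.prod_dvd_of_isRelPrime (fun i hi j hj hij => ?_) hs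
  have hi0 : φ (L i) ≠ 0 := fun h => hdistinct hj hi hij.symm (h ▸ dvd_zero _)
  exact (irreducible_of_isHomogeneous_one (hφhom _ (hL i hi)) hi0).isRelPrime_iff_not_dvd.mpr
    (hdistinct hi hj hij)

end LinearForm

section JoinForm

variable {K : Type*} [CommRing K] {m : ℕ} {a : Fin m → K} {p q r : MvPolynomial (Fin m) K}

theorem lderiv_eq_C_eval (hp : p.IsHomogeneous 1) : lderiv a p = C (eval a p) := by
  rw [← mem_homogeneousSubmodule, homogeneousSubmodule_one_eq_span_X] at hp
  rw [← sum_smul_pderiv_apply]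
  induction hp using Submodule.span_induction with
  | mem f hf =>
    obtain ⟨i, rfl⟩ := hf
    rw [sum_smul_pderiv_apply]
    simp [lderiv, pderiv_X, Pi.single_apply, smul_eq_C_mul]
  | zero => simp
  | add f g _ _ hf hg => rw [map_add, hf, hg, map_add, C_add]
  | smul c f _ hf => rw [Derivation.map_smul, hf, smul_eval, C_mul, smul_eq_C_mul]

theorem isUnit_lderiv (hp : p.IsHomogeneous 1) (hpa : IsUnit (eval a p)) : IsUnit (lderiv a p) := by
  rw [lderiv_eq_C_eval hp]
  exact hpa.map C

/-- The linear form `p(ℓ∨) • q - q(ℓ∨) • p`, which defines the hyperplane spanned by the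
codimension-two subspace `V(p, q)` and the dual point `ℓ∨`: the form `ℓ_Q` for `Q = (p, q)`. -/
noncomputable def joinForm (a : Fin m → K) (p q : MvPolynomial (Fin m) K) :
    MvPolynomial (Fin m) K :=
  eval a p • q - eval a q • p

theorem isHomogeneous_joinForm (hp : p.IsHomogeneous 1) (hq : q.IsHomogeneous 1) :
    (joinForm a p q).IsHomogeneous 1 :=
  Submodule.sub_mem (homogeneousSubmodule (Fin m) K 1)
    (Submodule.smul_mem _ _ hq) (Submodule.smul_mem _ _ hp)

theorem eval_joinForm : eval a (joinForm a p q) = 0 := by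
  simp [joinForm, mul_comm]

theorem joinForm_mem_span_pair : joinForm a p q ∈ Ideal.span {p, q} :=
  Ideal.mem_span_pair.mpr
    ⟨-C (eval a q), C (eval a p), by simp only [joinForm, smul_eq_C_mul]; ring⟩

theorem joinForm_ne_zero (hpq : LinearIndependent K ![p, q]) (hpa : eval a p ≠ 0) :
    joinForm a p q ≠ 0 := by
  intro h
  refine hpa (LinearIndependent.pair_iff.mp hpq (-eval a q) (eval a p) ?_).2
  rw [← h, joinForm, neg_smul, neg_add_eq_sub]

theorem ideal_span_pair_joinForm_mul (hpa : IsUnit (eval a p)) (f : MvPolynomial (Fin m) K) :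
    Ideal.span {p, joinForm a p q * f} = Ideal.span {p, q * f} := by
  have hsplit : joinForm a p q * f = C (eval a p) * (q * f) + p * (-C (eval a q) * f) := by
    simp only [joinForm, smul_eq_C_mul]
    ring
  rw [hsplit, Ideal.span_pair_add_left_mul, Ideal.span_insert, Ideal.span_insert,
    Ideal.span_singleton_mul_left_unit (hpa.map C)]

-- On the pencil spanned by `p` and `q` the derivation is multiplication by a single polynomial.
theorem dvd_residualDerivation_joinForm (hp : p.IsHomogeneous 1) (hq : q.IsHomogeneous 1)
    (hr : r ∈ Submodule.span K {p, q}) (j : Fin m) :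
    r ∣ residualDerivation a j (pderiv j p * q - pderiv j q * p) (joinForm a p q) r := by
  obtain ⟨c, d, rfl⟩ := Submodule.mem_span_pair.mp hr
  refine ⟨C (eval a q) * pderiv j p - C (eval a p) * pderiv j q, ?_⟩
  have hp' := lderiv_eq_C_eval (a := a) hp
  have hq' := lderiv_eq_C_eval (a := a) hq
  rw [map_add, Derivation.map_smul, Derivation.map_smul, residualDerivation_apply,
    residualDerivation_apply, hp', hq', joinForm]
  simp only [smul_eq_C_mul]
  ring

theorem joinForm_mem_genResidual {ι : Type*} {t : Finset ι} {L : ι → MvPolynomial (Fin m) K}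
    (hp : p.IsHomogeneous 1) (hq : q.IsHomogeneous 1)
    (hL : ∀ i ∈ t, L i ∈ Submodule.span K {p, q}) :
    joinForm a p q ∈ genResidual a (p * ∏ i ∈ t, L i) :=
  mem_genResidual_iff.mpr fun j =>
    ⟨pderiv j p * q - pderiv j q * p, mul_dvd_derivation_mul _
      (dvd_residualDerivation_joinForm hp hq (Submodule.mem_span_of_mem (by simp)) j)
      (prod_dvd_derivation_prod _ fun i hi => dvd_residualDerivation_joinForm hp hq (hL i hi) j)⟩

theorem joinForm_mul_prod_mem_genResidual {ι : Type*} [Fintype ι] {P : ι → Prop}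
    [DecidablePred P] {L : ι → MvPolynomial (Fin m) K} (hp : p.IsHomogeneous 1)
    (hq : q.IsHomogeneous 1) (hL : ∀ i, P i → L i ∈ Submodule.span K {p, q}) :
    joinForm a p q * ∏ i with ¬P i, L i ∈ genResidual a (p * ∏ i, L i) := by
  have hpencil : joinForm a p q ∈ genResidual a (p * ∏ i with P i, L i) :=
    joinForm_mem_genResidual hp hq fun i hi => hL i (Finset.mem_filter.mp hi).2
  have hsplit : (∏ i with ¬P i, L i) * (p * ∏ i with P i, L i) = p * ∏ i, L i := by
    rw [mul_left_comm, Finset.prod_filter_not_mul_prod_filter]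
  rw [← hsplit, mul_comm (joinForm a p q)]
  exact mul_mem_genResidual_mul hpencil

theorem genResidual_mul_le_span_pair {K : Type*} [Field K] {a : Fin m → K}
    {p q : MvPolynomial (Fin m) K} (hp : p.IsHomogeneous 1)
    (hq : q.IsHomogeneous 1) (hpq : LinearIndependent K ![p, q]) (hpa : eval a p ≠ 0) :
    genResidual a (p * q) ≤ Ideal.span {p, q} := by
  intro s hs
  obtain ⟨j, c, hc, hj⟩ :=
    exists_pderiv_eq_C (isHomogeneous_joinForm hp hq) (joinForm_ne_zero hpq hpa)
  obtain ⟨u, hu⟩ := mem_genResidual_iff.mp hs j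
  have hrel := isRelPrime_of_linearIndependent hp hq hpq
  obtain ⟨v, hv⟩ := dvd_derivation_of_mul_dvd_derivation_mul _ hrel hu
  obtain ⟨w, hw⟩ := dvd_derivation_of_mul_dvd_derivation_mul _ hrel.symm (by rwa [mul_comm q p])
  rw [residualDerivation_apply, lderiv_eq_C_eval hp] at hv
  rw [residualDerivation_apply, lderiv_eq_C_eval hq] at hw
  rw [joinForm, map_sub, Derivation.map_smul, Derivation.map_smul, smul_eq_C_mul,
    smul_eq_C_mul] at hj
  rw [← Ideal.unit_mul_mem_iff_mem _ (hc.isUnit.map C), Ideal.mem_span_pair]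
  exact ⟨C (eval a q) * v, -C (eval a p) * w, by
    linear_combination s * hj - C (eval a q) * hv + C (eval a p) * hw⟩

end JoinForm

section RegularSequence

theorem isRegular_pair_of_prime {R : Type*} [CommRing R] [IsDomain R] {x p : R} (hx : Prime x)
    (hxp : ¬x ∣ p) (hspan : Ideal.span {x, p} ≠ ⊤) : RingTheory.Sequence.IsRegular R [x, p] := by
  refine ⟨?_, fun h => hspan ?_⟩
  · rw [RingTheory.Sequence.isWeaklyRegular_cons_iff,
      RingTheory.Sequence.isWeaklyRegular_singleton_iff]
    refine ⟨IsSMulRegular.of_ne_zero hx.ne_zero,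
      (isSMulRegular_quotient_iff_mem_of_smul_mem _ _).mpr fun z => ?_⟩
    simp only [Submodule.mem_smul_pointwise_iff_exists, Submodule.mem_top, true_and, smul_eq_mul]
    rintro ⟨y, hy⟩
    obtain ⟨w, hw⟩ := (hx.dvd_or_dvd (Dvd.intro y hy)).resolve_left hxp
    exact ⟨w, hw.symm⟩
  · rw [h, Ideal.span_insert]
    simp

theorem ideal_span_pair_ne_top {σ K : Type*} [CommRing K] [Nontrivial K] {x f : MvPolynomial σ K}
    (hx : constantCoeff x = 0) (hf : constantCoeff f = 0) : Ideal.span {x, f} ≠ ⊤ := by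
  refine ne_top_of_le_ne_top (RingHom.ker_ne_top constantCoeff) (Ideal.span_le.mpr ?_)
  exact Set.pair_subset hx hf

end RegularSequence

section BasicDoubleLink

/-- `J` is the basic double link `x·I + (p)` of `I`: here `p ∈ I` and `x, p` is a regular
sequence. -/
structure IsBasicDoubleLink {R : Type*} [CommRing R] (I J : Ideal R) (x p : R) : Prop where
  eq_sup : J = Ideal.span {x} * I ⊔ Ideal.span {p}
  mem : p ∈ I
  isRegular : RingTheory.Sequence.IsRegular R [x, p]

variable {K ι : Type*} [Field K] {m : ℕ} {a : Fin m → K} {p x : MvPolynomial (Fin m) K}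
  {L : ι → MvPolynomial (Fin m) K} {t : Finset ι}

theorem isRelPrime_prod (hL : ∀ i, (L i).IsHomogeneous 1) (hx : x.IsHomogeneous 1)
    (hxL : ∀ i, LinearIndependent K ![x, L i]) (t : Finset ι) : IsRelPrime x (∏ i ∈ t, L i) :=
  IsRelPrime.prod_right fun i _ => isRelPrime_of_linearIndependent hx (hL i) (hxL i)

theorem genResidual_mul_prod_le_span_pair (hL : ∀ i, (L i).IsHomogeneous 1)
    (hLL : Pairwise fun i j => LinearIndependent K ![L i, L j]) (hx : x.IsHomogeneous 1)
    (hxL : ∀ i, LinearIndependent K ![x, L i]) (hxa : eval a x ≠ 0)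
    (hinj : Set.InjOn (fun i => Ideal.span {x, L i}) (t : Set ι)) :
    genResidual a (x * ∏ i ∈ t, L i) ≤ Ideal.span {x, ∏ i ∈ t, L i} := by
  classical
  intro s hs
  have hx0 : x ≠ 0 := by
    rintro rfl
    simp at hxa
  refine mem_span_pair_prod hx hx0 (fun i _ => hL i) (fun i hi j hj hij hmem => ?_) fun i hi => ?_
  · exact hij.symm (hinj hj hi (ideal_span_pair_eq_of_linearIndependent hx (hL i) hx (hL j) (hxL j)
      (Ideal.subset_span (by simp)) hmem))
  · have hrel : IsRelPrime (x * L i) (∏ j ∈ t.erase i, L j) :=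
      (isRelPrime_prod hL hx hxL _).mul_left (IsRelPrime.prod_right fun j hj =>
        isRelPrime_of_linearIndependent (hL i) (hL j) (hLL (Finset.ne_of_mem_erase hj).symm))
    rw [← Finset.mul_prod_erase t L hi, ← mul_assoc] at hs
    exact genResidual_mul_le_span_pair hx (hL i) (hxL i) hxa (genResidual_mul_le_left hrel hs)

theorem totalDegree_eq_ncard_of_injOn (hp : p.IsHomogeneous t.card) (hp0 : p ≠ 0)
    (hinj : Set.InjOn (fun i => Ideal.span {x, L i}) (t : Set ι))
    (hsurj : ∀ i, ∃ j ∈ t, Ideal.span {x, L i} = Ideal.span {x, L j}) :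
    p.totalDegree = {I | ∃ i, I = Ideal.span {L i, x}}.ncard := by
  have himage : {I | ∃ i, I = Ideal.span {L i, x}} = (fun i => Ideal.span {x, L i}) '' t := by
    ext I
    constructor
    · rintro ⟨i, rfl⟩
      obtain ⟨j, hj, h⟩ := hsurj i
      exact ⟨j, hj, by rw [Ideal.span_pair_comm, h]⟩
    · rintro ⟨i, -, rfl⟩
      exact ⟨i, Ideal.span_pair_comm⟩
  rw [hp.totalDegree hp0, himage, hinj.ncard_image, Set.ncard_coe_finset]

variable [Fintype ι]

theorem isBasicDoubleLink_genResidual (hL : ∀ i, (L i).IsHomogeneous 1)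
    (hLL : Pairwise fun i j => LinearIndependent K ![L i, L j]) (hx : x.IsHomogeneous 1)
    (hxL : ∀ i, LinearIndependent K ![x, L i]) (hxa : eval a x ≠ 0) (ht : t.Nonempty)
    (hinj : Set.InjOn (fun i => Ideal.span {x, L i}) (t : Set ι))
    (hp : p ∈ genResidual a (x * ∏ i, L i))
    (hspan : Ideal.span {x, p} = Ideal.span {x, ∏ i ∈ t, L i}) :
    IsBasicDoubleLink (genResidual a (∏ i, L i)) (genResidual a (x * ∏ i, L i)) x p := by
  classical
  have hrel := isRelPrime_prod hL hx hxL
  have hx_prime : Prime x :=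
    (irreducible_of_isHomogeneous_one hx (by rintro rfl; simp at hxa)).prime
  have hle : genResidual a (x * ∏ i, L i) ≤ Ideal.span {x, p} := by
    have hcompl : IsRelPrime (x * ∏ i ∈ t, L i) (∏ i ∈ tᶜ, L i) :=
      (hrel _).mul_left (IsRelPrime.prod_left fun i hi => IsRelPrime.prod_right fun j hj =>
        isRelPrime_of_linearIndependent (hL i) (hL j)
          (hLL (by rintro rfl; exact Finset.mem_compl.mp hj hi)))
    rw [hspan, ← Finset.prod_mul_prod_compl t, ← mul_assoc]
    exact (genResidual_mul_le_left hcompl).trans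
      (genResidual_mul_prod_le_span_pair hL hLL hx hxL hxa hinj)
  have hconst {q : MvPolynomial (Fin m) K} (hq : q.IsHomogeneous 1) : constantCoeff q = 0 :=
    hq.coeff_eq_zero (by simp)
  refine ⟨genResidual_mul_eq_sup (hrel _) (isUnit_lderiv hx hxa.isUnit) hp hle,
    genResidual_mul_le_left (hrel _).symm (by rwa [mul_comm _ x]),
    isRegular_pair_of_prime hx_prime (fun hdvd => ?_) ?_⟩
  · have hdvd_prod : x ∣ ∏ i ∈ t, L i := by
      rw [← Ideal.mem_span_singleton, ← Ideal.span_pair_eq_span_left_iff_dvd.mpr hdvd, hspan]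
      exact Ideal.subset_span (by simp)
    exact (hx_prime.irreducible.isRelPrime_iff_not_dvd.mp (hrel t)) hdvd_prod
  · obtain ⟨i, hi⟩ := ht
    rw [hspan]
    refine ideal_span_pair_ne_top (hconst hx) ?_
    rw [map_prod, Finset.prod_eq_zero hi (hconst (hL i))]

end BasicDoubleLink

section AlmostGeneric

variable {K : Type*} [Field K] {m d : ℕ} {a : Fin m → K} {x : MvPolynomial (Fin m) K}
  {L : Fin d → MvPolynomial (Fin m) K} {Q : Ideal (MvPolynomial (Fin m) K)}

theorem mem_singSupp_of_span_pair_eq (hL : ∀ i, (L i).IsHomogeneous 1)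
    (hLL : Pairwise fun i j => LinearIndependent K ![L i, L j]) (hx : x.IsHomogeneous 1)
    {i j : Fin d} (hij : i ≠ j) (h : Ideal.span {x, L i} = Ideal.span {x, L j}) :
    Ideal.span {x, L i} ∈ singSupp L :=
  ⟨i, j, hij, (ideal_span_pair_eq_of_linearIndependent hx (hL i) (hL i) (hL j) (hLL hij)
    (Ideal.subset_span (by simp)) (h ▸ Ideal.subset_span (by simp))).symm⟩

theorem span_pair_eq_of_mem_singSupp (hL : ∀ i, (L i).IsHomogeneous 1) (hx : x.IsHomogeneous 1)
    (hxL : ∀ i, LinearIndependent K ![x, L i]) (hQ : Q ∈ singSupp L) (hxQ : x ∈ Q) {i : Fin d}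
    (hi : L i ∈ Q) : Ideal.span {x, L i} = Q := by
  obtain ⟨j, k, -, rfl⟩ := hQ
  exact ideal_span_pair_eq_of_linearIndependent (hL j) (hL k) hx (hL i) (hxL i) hxQ hi

theorem isBasicDoubleLink_of_forall_notMem (hd : 0 < d) (hL : ∀ i, (L i).IsHomogeneous 1)
    (hLL : Pairwise fun i j => LinearIndependent K ![L i, L j]) (hx : x.IsHomogeneous 1)
    (hxL : ∀ i, LinearIndependent K ![x, L i]) (hxa : eval a x ≠ 0)
    (hS : ∀ P ∈ singSupp L, x ∉ P) :
    IsBasicDoubleLink (genResidual a (∏ i, L i)) (genResidual a (x * ∏ i, L i)) x (∏ i, L i) ∧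
      (∏ i, L i).totalDegree = {I | ∃ i, I = Ideal.span {L i, x}}.ncard := by
  have hinj : Set.InjOn (fun i => Ideal.span {x, L i}) (Finset.univ : Finset (Fin d)) :=
    fun i _ j _ hij => by_contra fun hne =>
      hS _ (mem_singSupp_of_span_pair_eq hL hLL hx hne hij) (Ideal.subset_span (by simp))
  have hmem : ∏ i, L i ∈ genResidual a (x * ∏ i, L i) := by
    have hone : 1 ∈ genResidual a x := by
      rw [genResidual_eq_top (isUnit_lderiv hx hxa.isUnit)]
      exact Submodule.mem_top
    simpa [mul_comm x] using mul_mem_genResidual_mul (g := ∏ i, L i) hone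
  exact ⟨isBasicDoubleLink_genResidual hL hLL hx hxL hxa ⟨⟨0, hd⟩, Finset.mem_univ _⟩ hinj hmem
      rfl, totalDegree_eq_ncard_of_injOn (isHomogeneous_prod_card _ fun i _ => hL i)
      (Finset.prod_ne_zero_iff.mpr fun i _ => (hxL i).ne_zero 1) hinj
      fun i => ⟨i, Finset.mem_univ i, rfl⟩⟩

open Classical in
theorem injOn_span_pair_insert (hL : ∀ i, (L i).IsHomogeneous 1)
    (hLL : Pairwise fun i j => LinearIndependent K ![L i, L j]) (hx : x.IsHomogeneous 1)
    (halmost : {P | P ∈ singSupp L ∧ x ∈ P}.Subsingleton) (hQ : Q ∈ singSupp L) (hxQ : x ∈ Q)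
    (i₀ : Fin d) :
    Set.InjOn (fun i => Ideal.span {x, L i})
      (insert i₀ (Finset.univ.filter fun i => L i ∉ Q) : Finset (Fin d)) := by
  intro i hi j hj hij
  by_contra hne
  have hxi : x ∈ Ideal.span {x, L i} := Ideal.subset_span (by simp)
  have heq : Ideal.span {x, L i} = Q :=
    halmost ⟨mem_singSupp_of_span_pair_eq hL hLL hx hne hij, hxi⟩ ⟨hQ, hxQ⟩
  have hiQ : L i ∈ Q := heq ▸ Ideal.subset_span (by simp)
  have hjQ : L j ∈ Q := heq.symm.trans hij ▸ Ideal.subset_span (by simp)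
  simp_all

open Classical in
theorem isBasicDoubleLink_joinForm_mul (hL : ∀ i, (L i).IsHomogeneous 1)
    (hLL : Pairwise fun i j => LinearIndependent K ![L i, L j]) (hx : x.IsHomogeneous 1)
    (hxL : ∀ i, LinearIndependent K ![x, L i]) (hxa : eval a x ≠ 0)
    (halmost : {P | P ∈ singSupp L ∧ x ∈ P}.Subsingleton) (hQ : Q ∈ singSupp L) (hxQ : x ∈ Q)
    {i₀ : Fin d} (hi₀ : L i₀ ∈ Q) :
    IsBasicDoubleLink (genResidual a (∏ i, L i)) (genResidual a (x * ∏ i, L i)) x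
        (joinForm a x (L i₀) * ∏ i with L i ∉ Q, L i) ∧
      (joinForm a x (L i₀) * ∏ i with L i ∉ Q, L i).totalDegree =
        {I | ∃ i, I = Ideal.span {L i, x}}.ncard := by
  have htrace {i : Fin d} (hi : L i ∈ Q) : Ideal.span {x, L i} = Q :=
    span_pair_eq_of_mem_singSupp hL hx hxL hQ hxQ hi
  have hi₀_notMem : i₀ ∉ Finset.univ.filter fun i => L i ∉ Q := by simp [hi₀]
  have hinj := injOn_span_pair_insert hL hLL hx halmost hQ hxQ i₀
  have hmem : joinForm a x (L i₀) * ∏ i with L i ∉ Q, L i ∈ genResidual a (x * ∏ i, L i) :=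
    joinForm_mul_prod_mem_genResidual hx (hL i₀) fun i hi =>
      mem_span_pair_of_mem_ideal_span_pair hx (hL i₀) (hL i) ((htrace hi₀).symm ▸ hi)
  refine ⟨isBasicDoubleLink_genResidual hL hLL hx hxL hxa (Finset.insert_nonempty _ _) hinj hmem
    ?_, totalDegree_eq_ncard_of_injOn ?_ ?_ hinj fun i => ?_⟩
  · rw [Finset.prod_insert hi₀_notMem, ideal_span_pair_joinForm_mul hxa.isUnit]
  · rw [Finset.card_insert_of_notMem hi₀_notMem, add_comm]
    exact (isHomogeneous_joinForm hx (hL i₀)).mul (isHomogeneous_prod_card _ fun i _ => hL i)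
  · exact mul_ne_zero (joinForm_ne_zero (hxL i₀) hxa)
      (Finset.prod_ne_zero_iff.mpr fun i _ => (hxL i).ne_zero 1)
  · by_cases hi : L i ∈ Q
    · exact ⟨i₀, Finset.mem_insert_self _ _, by rw [htrace hi, htrace hi₀]⟩
    · exact ⟨i, by simp [hi], rfl⟩

end AlmostGeneric

open Classical in
theorem stmt_14_general {K : Type*} [Field K] {m d : ℕ} (hd : 0 < d)
    (L : Fin d → MvPolynomial (Fin m) K)
    (hhom : ∀ i, (L i).IsHomogeneous 1) (hne : ∀ i, L i ≠ 0)
    (hprop : ∀ i j, i ≠ j → ∀ c : K, L i ≠ c • L j)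
    (x : MvPolynomial (Fin m) K) (hx : x.IsHomogeneous 1)
    (hxnotinA : ∀ i, ∀ c : K, x ≠ c • L i)
    (halmost : {P | P ∈ singSupp L ∧ x ∈ P}.Subsingleton)
    (a : Fin m → K) (hxa : eval a x ≠ 0) :
    ∃ p : MvPolynomial (Fin m) K,
      (genResidual a (x * ∏ i, L i) =
        Ideal.span {x} * genResidual a (∏ i, L i) ⊔ Ideal.span {p}) ∧
      p ∈ genResidual a (∏ i, L i) ∧
      RingTheory.Sequence.IsRegular (MvPolynomial (Fin m) K) [x, p] ∧
      p.totalDegree =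
        Set.ncard {I : Ideal (MvPolynomial (Fin m) K) | ∃ i, I = Ideal.span {L i, x}} ∧
      ((∀ P ∈ singSupp L, x ∉ P) → p = ∏ i, L i) ∧
      (∀ Q ∈ singSupp L, x ∈ Q →
        ∃ lQ : MvPolynomial (Fin m) K, lQ.IsHomogeneous 1 ∧ lQ ≠ 0 ∧
          lQ ∈ Q ∧ eval a lQ = 0 ∧
          p = lQ * ∏ i ∈ Finset.univ.filter (fun i => L i ∉ Q), L i) := by
  have hLL : Pairwise fun i j => LinearIndependent K ![L i, L j] := fun i j hij =>
    (LinearIndependent.pair_iff' (hne i)).mpr fun c hc => hprop j i hij.symm c hc.symm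
  have hxL (i : Fin d) : LinearIndependent K ![x, L i] := LinearIndependent.pair_symm_iff.mp <|
    (LinearIndependent.pair_iff' (hne i)).mpr fun c hc => hxnotinA i c hc.symm
  by_cases hS : ∀ P ∈ singSupp L, x ∉ P
  · obtain ⟨hlink, hdeg⟩ := isBasicDoubleLink_of_forall_notMem hd hhom hLL hx hxL hxa hS
    exact ⟨_, hlink.eq_sup, hlink.mem, hlink.isRegular, hdeg, fun _ => rfl,
      fun Q hQ hxQ => absurd hxQ (hS Q hQ)⟩
  · push Not at hS
    obtain ⟨Q, hQ, hxQ⟩ := hS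
    obtain ⟨i₀, j, -, hQij⟩ := id hQ
    have hi₀ : L i₀ ∈ Q := hQij ▸ Ideal.subset_span (by simp)
    obtain ⟨hlink, hdeg⟩ :=
      isBasicDoubleLink_joinForm_mul hhom hLL hx hxL hxa halmost hQ hxQ hi₀
    refine ⟨_, hlink.eq_sup, hlink.mem, hlink.isRegular, hdeg, fun h => absurd hxQ (h Q hQ),
      fun Q' hQ' hxQ' => ⟨joinForm a x (L i₀), isHomogeneous_joinForm hx (hhom i₀),
        joinForm_ne_zero (hxL i₀) hxa, ?_, eval_joinForm, ?_⟩⟩ <;>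
      rw [halmost ⟨hQ', hxQ'⟩ ⟨hQ, hxQ⟩]
    exact Ideal.span_le.mpr (Set.pair_subset hxQ hi₀) joinForm_mem_span_pair

open Classical in
/-- Let `K` have characteristic zero, let `A` be a set of `d ≥ 2`
distinct hyperplanes in `ℙⁿ` (given by pairwise non-proportional linear forms `L i`, with
`f_A = Π L i`), and let `H = V(x)` be a hyperplane not in `A` containing at most one
subspace of `S(A)` (`H` is almost generic).  Then, for a general linear form `ℓ`, the
general residual of `A ∪ {H}` is a basic double link of `r_A`:
`r_{A∪{H}} = x·r_A + (p)`, where `x, p` is a regular sequence, `p ∈ r_A`,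
`deg p = |A ∩ H|` (the number of distinct codimension-two subspaces `H' ∩ H`, `H' ∈ A`),
and `p` can be taken to be `f_A` when `H` contains no subspace of `S(A)`, and `ℓ_Q·h`
when `S(A) ∩ H = {Q}`, where `h` is the product of the linear divisors of `f_A` defining
hyperplanes not containing `Q` and `ℓ_Q` is a linear form defining the line spanned by
`Q` and the dual point `ℓ∨`. -/
theorem stmt_14 {K : Type*} [Field K] [CharZero K] {n d : ℕ} (hd : 2 ≤ d)
    (L : Fin d → MvPolynomial (Fin (n + 1)) K)
    (hhom : ∀ i, (L i).IsHomogeneous 1) (hne : ∀ i, L i ≠ 0)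
    (hprop : ∀ i j, i ≠ j → ∀ c : K, L i ≠ c • L j)
    (x : MvPolynomial (Fin (n + 1)) K) (hx : x.IsHomogeneous 1) (hx0 : x ≠ 0)
    (hxnotinA : ∀ i, ∀ c : K, x ≠ c • L i)
    (halmost : {P | P ∈ singSupp L ∧ x ∈ P}.Subsingleton) :
    ∃ p₀ : MvPolynomial (Fin (n + 1)) K, p₀ ≠ 0 ∧
      ∀ a : Fin (n + 1) → K, eval a p₀ ≠ 0 →
        ∃ p : MvPolynomial (Fin (n + 1)) K,
          (genResidual a (x * ∏ i, L i) =
            Ideal.span {x} * genResidual a (∏ i, L i) ⊔ Ideal.span {p}) ∧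
          p ∈ genResidual a (∏ i, L i) ∧
          RingTheory.Sequence.IsRegular (MvPolynomial (Fin (n + 1)) K) [x, p] ∧
          p.totalDegree =
            Set.ncard {I : Ideal (MvPolynomial (Fin (n + 1)) K) |
              ∃ i, I = Ideal.span {L i, x}} ∧
          ((∀ P ∈ singSupp L, x ∉ P) → p = ∏ i, L i) ∧
          (∀ Q ∈ singSupp L, x ∈ Q →
            ∃ lQ : MvPolynomial (Fin (n + 1)) K, lQ.IsHomogeneous 1 ∧ lQ ≠ 0 ∧
              lQ ∈ Q ∧ eval a lQ = 0 ∧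
              p = lQ * ∏ i ∈ Finset.univ.filter (fun i => L i ∉ Q), L i) := by
  exact ⟨x, hx0, fun a hxa =>
    stmt_14_general (by omega) L hhom hne hprop x hx hxnotinA halmost a hxa⟩
end

section
/- Freeness criterion for line arrangements: let K have characteristic zero and let A be a set of d ≥ 3 distinct lines of ℙ² that are not all concurrent, with defining polynomial f_A and Jacobian ideal Jac(f_A) ⊆ S = K[x₀,x₁,x₂]. Let ℓ be a general linear form with dual point Q = ℓ∨, let r_A = (f_A, ∂f_A/∂ℓ) : Jac(f_A) be the general residual, and set I := r_A ∩ I_Q. Then the following are equivalent: (a) the line arrangement A is free, i.e. Jac(f_A) is a saturated ideal (Jac(f_A) : (x₀,x₁,x₂) = Jac(f_A)); (b) the ideal I is generated by two homogeneous polynomials of degrees a and b with a + b = d + 1 and a, b ≥ 2. -/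
open MvPolynomial

/-- The homogeneous (prime) ideal `I_Q` of the point `Q` with coordinate vector `a`,
generated by the linear forms vanishing at `Q`. -/
noncomputable def pointIdeal {K : Type*} [CommRing K] {m : ℕ} (a : Fin m → K) :
    Ideal (MvPolynomial (Fin m) K) :=
  Ideal.span {h : MvPolynomial (Fin m) K | h.IsHomogeneous 1 ∧ eval a h = 0}

/-!
The syzygies `θ` of the gradient `∇` of `f` are the derivations killing `f`. The Jacobian ideal is
saturated iff the first Koszul homology of the syzygy module vanishes, and by graded Nakayama this
happens iff the module is free, necessarily of rank two.

Let `a` be the coefficient vector of `ℓ` and let `y = x × a`, a vector of linear forms cutting out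
`Q`. Expanding `(θ ⬝ y) ∇` by Cramer's rule, and using that `f` and `∂f/∂ℓ` are coprime, one finds
that `θ ↦ θ ⬝ y` maps the syzygies onto `I` and that its kernel is generated by `∇ × y`, which has
degree `d`. If `I` is generated by `μ ⬝ y` and `ν ⬝ y`, then `(ν ⬝ y) μ - (μ ⬝ y) ν = c (∇ × y)`
for some `c ≠ 0`, and `μ, ν` is a basis iff `c` is constant. Comparing degrees, this says that the
degrees of the two generators of `I` add up to `d + 1`.
-/

open scoped Matrix

section RelPrime

variable {R : Type*} [CommRing R] [IsDomain R] [DecompositionMonoid R]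

lemma exists_eq_mul_of_isRelPrime {u v s t : R} (huv : IsRelPrime u v) (h : u * s = v * t) :
    ∃ w, s = v * w ∧ t = u * w := by
  obtain ⟨w, rfl⟩ := huv.symm.dvd_of_dvd_mul_left ⟨t, h⟩
  rcases eq_or_ne v 0 with rfl | hv
  · obtain ⟨r, hr⟩ := (isRelPrime_zero_right.1 huv).dvd (a := t)
    exact ⟨r, by simp, hr⟩
  · exact ⟨w, rfl, mul_left_cancel₀ hv (by rw [← h]; ring)⟩

lemma dvd_of_dvd_mul_of_isRelPrime {q y u v : R} (huv : IsRelPrime u v) (hu : q ∣ y * u)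
    (hv : q ∣ y * v) : q ∣ y := by
  obtain ⟨q₁, q₂, ⟨r, rfl⟩, hq₂, rfl⟩ := exists_dvd_and_dvd_of_dvd_mul hu
  rcases eq_or_ne q₁ 0 with rfl | hq₁
  · simp
  rw [mul_assoc, mul_dvd_mul_iff_left hq₁] at hv
  exact mul_dvd_mul_left q₁ ((huv.of_dvd_left hq₂).dvd_of_dvd_mul_right hv)

/- Expressing `h * y` and `h * z` through `u, v` and eliminating `h` gives two relations whose
difference factor `t` satisfies `t * u ∈ (y, z)`; correcting by `t` makes `y` cancel. -/
lemma mem_span_pair_of_mul_mem_span_pair {u v y z h : R} (huv : IsRelPrime u v)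
    (hyz : IsRelPrime y z) (hy : y ≠ 0)
    (hu : ∀ t, t * u ∈ Ideal.span {y, z} → t ∈ Ideal.span {y, z})
    (hhy : h * y ∈ Ideal.span {u, v}) (hhz : h * z ∈ Ideal.span {u, v}) :
    h ∈ Ideal.span {u, v} := by
  obtain ⟨α, β, hαβ⟩ := Ideal.mem_span_pair.1 hhy
  obtain ⟨γ, δ, hγδ⟩ := Ideal.mem_span_pair.1 hhz
  obtain ⟨t, hvt, hut⟩ := exists_eq_mul_of_isRelPrime (s := z * α - y * γ) (t := y * δ - z * β)
    huv (by linear_combination z * hαβ - y * hγδ)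
  obtain ⟨t₁, t₂, rfl⟩ := Ideal.mem_span_pair.1 (hu t (Ideal.mem_span_pair.2
    ⟨δ, -β, by linear_combination hut⟩))
  obtain ⟨r, hr, -⟩ := exists_eq_mul_of_isRelPrime (s := α - v * t₂) (t := γ + v * t₁)
    hyz.symm (by linear_combination hvt)
  obtain ⟨s, hs, -⟩ := exists_eq_mul_of_isRelPrime (s := β + u * t₂) (t := δ - u * t₁)
    hyz.symm (by linear_combination -hut)
  refine Ideal.mem_span_pair.2 ⟨r, s, mul_left_cancel₀ hy ?_⟩
  linear_combination hαβ - u * hr - v * hs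

lemma isRelPrime_of_mul_mem_span_pair {u v y z g h : R} (huv : IsRelPrime u v)
    (hyz : IsRelPrime y z)
    (hmem : ∀ p ∈ ({y, z} : Set R), ∀ q ∈ ({u, v} : Set R), p * q ∈ Ideal.span {g, h}) :
    IsRelPrime g h := by
  intro q hg hh
  have hdvd : ∀ w ∈ Ideal.span {g, h}, q ∣ w := fun w hw => by
    obtain ⟨a, b, rfl⟩ := Ideal.mem_span_pair.1 hw
    exact dvd_add (hg.mul_left a) (hh.mul_left b)
  have hdvd' : ∀ p ∈ ({y, z} : Set R), q ∣ p := fun p hp =>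
    dvd_of_dvd_mul_of_isRelPrime huv (hdvd _ (hmem p hp u (by simp)))
      (hdvd _ (hmem p hp v (by simp)))
  exact hyz (hdvd' y (by simp)) (hdvd' z (by simp))

end RelPrime

section Syzygies

variable {R ι : Type*} [CommRing R] [Fintype ι]

/-- The module of syzygies of a finite family of ring elements. For the partial derivatives of a
form `f` it is the module of derivations killing `f`. -/
def syzygies (F : ι → R) : Submodule R (ι → R) :=
  LinearMap.ker (Fintype.linearCombination R F)

lemma mem_syzygies {F v : ι → R} : v ∈ syzygies F ↔ v ⬝ᵥ F = 0 := by
  simp [syzygies, Fintype.linearCombination_apply, dotProduct]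

lemma mem_span_range_iff_exists_dotProduct {F : ι → R} {u : R} :
    u ∈ Ideal.span (Set.range F) ↔ ∃ w : ι → R, w ⬝ᵥ F = u :=
  Ideal.mem_span_range_iff_exists_fun

lemma finrank_syzygies_add_one [IsDomain R] {F : ι → R} (hF : F ≠ 0) :
    Module.finrank R (syzygies F) + 1 = Fintype.card ι := by
  set Φ := Fintype.linearCombination R F
  have hrange : Module.finrank R (LinearMap.range Φ) = 1 := by
    refine le_antisymm ((Submodule.finrank_le _).trans_eq (Module.finrank_self R)) ?_
    obtain ⟨k, hk⟩ := Function.ne_iff.1 hF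
    refine Module.finrank_pos_iff_exists_ne_zero.2 ⟨⟨F k, ?_⟩, fun h => hk (congrArg Subtype.val h)⟩
    exact (Fintype.range_linearCombination R F).symm ▸ Submodule.subset_span ⟨k, rfl⟩
  rw [← Module.finrank_fintype_fun_eq_card R, ← (LinearMap.ker Φ).finrank_quotient_add_finrank,
    Φ.quotKerEquivRange.finrank_eq, hrange, add_comm]
  rfl

end Syzygies

section KoszulExact

variable {R : Type*} [CommRing R]

/-- Vanishing of the first Koszul homology of `M` with respect to the sequence `r 0, r 1, r 2`.
Indices are cyclic in `Fin 3`, so that the boundary `n ↦ r × n` is a cross product. -/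
def KoszulExact (r : Fin 3 → R) (M : Type*) [AddCommGroup M] [Module R M] : Prop :=
  ∀ m : Fin 3 → M, ∑ j, r j • m j = 0 →
    ∃ n : Fin 3 → M, ∀ j, m j = r (j + 1) • n (j + 2) - r (j + 2) • n (j + 1)

namespace KoszulExact

variable {r : Fin 3 → R}

lemma pi {ι : Type*} {M : ι → Type*} [∀ k, AddCommGroup (M k)] [∀ k, Module R (M k)]
    (h : ∀ k, KoszulExact r (M k)) : KoszulExact r (∀ k, M k) := by
  intro m hm
  choose n hn using fun k => h k (fun j => m j k) (by simpa using congrFun hm k)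
  exact ⟨fun j k => n k j, fun j => funext fun k => hn k j⟩

lemma of_equiv {M N : Type*} [AddCommGroup M] [Module R M] [AddCommGroup N] [Module R N]
    (e : M ≃ₗ[R] N) (h : KoszulExact r M) : KoszulExact r N := by
  intro m hm
  obtain ⟨n, hn⟩ := h (fun j => e.symm (m j)) (by simp only [← map_smul, ← map_sum, hm, map_zero])
  refine ⟨fun j => e (n j), fun j => ?_⟩
  rw [← e.apply_symm_apply (m j), hn j, map_sub, map_smul, map_smul]

lemma of_basis {ι M : Type*} [Finite ι] [AddCommGroup M] [Module R M] (b : Module.Basis ι R M)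
    (h : KoszulExact r R) : KoszulExact r M :=
  (pi fun _ : ι => h).of_equiv b.equivFun.symm

lemma of_span_pair {M : Type*} [AddCommGroup M] [Module R M] {N : Submodule R M} {u v : M}
    (h : KoszulExact r R) (huv : LinearIndependent R ![u, v])
    (hN : Submodule.span R {u, v} = N) : KoszulExact r N := by
  rw [← Matrix.range_cons_cons_empty u v ![]] at hN
  exact hN ▸ of_basis (Module.Basis.span huv) h

end KoszulExact

end KoszulExact

section KoszulSelf

variable {R : Type*} [CommRing R] [IsDomain R] [DecompositionMonoid R] {r : Fin 3 → R}

lemma koszulExact_self (h₁₂ : IsRelPrime (r 1) (r 2))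
    (h₀ : ∀ p, p * r 0 ∈ Ideal.span {r 1, r 2} → p ∈ Ideal.span {r 1, r 2}) :
    KoszulExact r R := by
  intro m hm
  simp only [Fin.sum_univ_three, smul_eq_mul] at hm
  obtain ⟨c, b, hcb⟩ := Ideal.mem_span_pair.1 (h₀ (m 0) (Ideal.mem_span_pair.2
    ⟨-m 1, -m 2, by linear_combination -hm⟩))
  obtain ⟨w, h₁, h₃⟩ := exists_eq_mul_of_isRelPrime (s := m 1 + r 0 * c) (t := -(m 2 + r 0 * b))
    h₁₂ (by linear_combination hm + r 0 * hcb)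
  refine ⟨![w, -b, c], fun j => ?_⟩
  fin_cases j <;> simp
  · linear_combination -hcb
  · linear_combination h₁
  · linear_combination -h₃

lemma exists_eq_smul_of_cross_eq_zero {ι : Type*} {i : Fin 3}
    (hi : IsRelPrime (r (i + 1)) (r (i + 2))) (hi₂ : r (i + 2) ≠ 0) {w : Fin 3 → ι → R}
    (hw : ∀ j, r (j + 1) • w (j + 2) = r (j + 2) • w (j + 1)) :
    ∃ c : ι → R, ∀ j, w j = r j • c := by
  have hk (k : ι) : ∃ c, ∀ j, w j k = r j * c := by
    obtain ⟨c, hc₂, hc₁⟩ := exists_eq_mul_of_isRelPrime hi (congrFun (hw i) k)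
    have h₁ : r (i + 2) * w i k = r i * w (i + 2) k := by
      simpa [add_assoc] using congrFun (hw (i + 1)) k
    refine ⟨c, fun j => ?_⟩
    obtain rfl | rfl | rfl : j = i ∨ j = i + 1 ∨ j = i + 2 := by lia
    · exact mul_left_cancel₀ hi₂ (by rw [h₁, hc₂]; ring)
    exacts [hc₁, hc₂]
  choose c hc using hk
  exact ⟨c, fun j => funext fun k => hc k j⟩

/- The cycles of the Koszul complex of the syzygy module are boundaries in the free module, and
the ideal membership of `u` is what is needed to move the primitive into the syzygy module. -/
lemma koszulExact_syzygies_iff {ι : Type*} [Fintype ι] (hr : KoszulExact r R)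
    (h₁₂ : IsRelPrime (r 1) (r 2)) (h₂ : r 2 ≠ 0) {F : ι → R} :
    KoszulExact r (syzygies F) ↔
      ∀ u, (∀ j, r j * u ∈ Ideal.span (Set.range F)) → u ∈ Ideal.span (Set.range F) := by
  simp only [mem_span_range_iff_exists_dotProduct]
  constructor
  · intro h u hu
    choose w hw using hu
    obtain ⟨n, hn⟩ := h (fun j => ⟨r (j + 1) • w (j + 2) - r (j + 2) • w (j + 1),
      mem_syzygies.2 (by simp only [sub_dotProduct, smul_dotProduct, hw, smul_eq_mul]; ring)⟩)
      (by ext; simp [Fin.sum_univ_three]; ring)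
    obtain ⟨c, hc⟩ := exists_eq_smul_of_cross_eq_zero (i := 0) h₁₂ h₂
      (w := fun j => w j - (n j : ι → R)) fun j => by
        have := congrArg Subtype.val (hn j)
        simp only [Submodule.coe_sub, Submodule.coe_smul] at this
        rwa [smul_sub, smul_sub, sub_eq_sub_iff_sub_eq_sub]
    refine ⟨c, mul_left_cancel₀ h₂ ?_⟩
    rw [← hw 2, ← sub_add_cancel (w 2) (n 2 : ι → R), add_dotProduct, hc 2, smul_dotProduct,
      mem_syzygies.1 (n 2).2, add_zero, smul_eq_mul]
  · intro h m hm
    obtain ⟨w, hw⟩ := KoszulExact.pi (fun _ : ι => hr) (fun j => (m j : ι → R))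
      (by simpa using congrArg Subtype.val hm)
    obtain ⟨u, hu⟩ := exists_eq_smul_of_cross_eq_zero (i := 0) h₁₂ h₂
      (w := fun j (_ : Unit) => w j ⬝ᵥ F) fun j => by
        have := mem_syzygies.1 (m j).2
        ext
        simpa [hw j, sub_dotProduct, sub_eq_zero] using this
    have hu' (j : Fin 3) : w j ⬝ᵥ F = r j * u () := congrFun (hu j) ()
    obtain ⟨c, hc⟩ := h (u ()) fun j => ⟨w j, hu' j⟩
    refine ⟨fun j => ⟨w j - r j • c, mem_syzygies.2 ?_⟩, fun j => Subtype.ext ?_⟩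
    · rw [sub_dotProduct, smul_dotProduct, hu', hc, smul_eq_mul, sub_self]
    · simp only [hw j, Submodule.coe_sub, Submodule.coe_smul, smul_sub, smul_comm (r (j + 1))]
      abel

end KoszulSelf

/- Exactness gives `ker ≤ (r) • ker` for the presentation by `v`, so Nakayama's lemma applies. -/
lemma KoszulExact.linearIndependent {R M ι : Type*} [CommRing R] [IsDomain R] [IsNoetherianRing R]
    [AddCommGroup M] [Module R M] [Fintype ι] {r : Fin 3 → R} (hr : Ideal.span (Set.range r) ≠ ⊤)
    (hM : KoszulExact r M) {v : ι → M} (hv : Submodule.span R (Set.range v) = ⊤)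
    (hrel : ∀ p : ι → R, ∑ i, p i • v i = 0 → ∀ i, p i ∈ Ideal.span (Set.range r)) :
    LinearIndependent R v := by
  set Φ := Fintype.linearCombination R v
  have hsurj : Function.Surjective Φ :=
    LinearMap.range_eq_top.1 ((Fintype.range_linearCombination R v).trans hv)
  have hker : LinearMap.ker Φ ≤ Ideal.span (Set.range r) • LinearMap.ker Φ := by
    intro p hp
    choose w hw using fun i => mem_span_range_iff_exists_dotProduct.1 (hrel p hp i)
    set q : Fin 3 → ι → R := fun j i => w i j
    have hpq : p = ∑ j, r j • q j := by
      ext i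
      simp [← hw i, dotProduct, q, mul_comm]
    obtain ⟨n, hn⟩ := hM (fun j => Φ (q j)) (by simp only [← map_smul, ← map_sum, ← hpq]; exact hp)
    choose q' hq' using fun j => hsurj (n j)
    have hpq' : p = ∑ j, r j • (q j - (r (j + 1) • q' (j + 2) - r (j + 2) • q' (j + 1))) := by
      rw [hpq, Fin.sum_univ_three, Fin.sum_univ_three]
      simp only [Fin.isValue, Fin.reduceAdd, zero_add]
      module
    rw [hpq']
    refine Submodule.sum_mem _ fun j _ =>
      Submodule.smul_mem_smul (Ideal.subset_span ⟨j, rfl⟩) (LinearMap.mem_ker.2 ?_)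
    simp only [map_sub, map_smul, hq', hn, sub_self]
  obtain ⟨s, hs, hs'⟩ := Submodule.exists_sub_one_mem_and_smul_eq_zero_of_fg_of_le_smul _ _
    (IsNoetherian.noetherian (LinearMap.ker Φ)) hker
  have hs₀ : s ≠ 0 := by
    rintro rfl
    exact hr ((Ideal.eq_top_iff_one _).2 (by simpa using hs))
  refine Fintype.linearIndependent_iff.2 fun p hp i => ?_
  simpa [hs₀] using congrFun (hs' p hp) i

section Graded

variable {σ ι K : Type*}

lemma mem_idealOfVars_iff_coeff_zero [CommRing K] {p : MvPolynomial σ K} :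
    p ∈ idealOfVars σ K ↔ coeff 0 p = 0 := by
  simpa [Finsupp.degree_eq_zero_iff] using mem_pow_idealOfVars_iff' 1 p

lemma idealOfVars_ne_top [CommRing K] [Nontrivial K] : idealOfVars σ K ≠ ⊤ := by
  simp [Ideal.ne_top_iff_one, mem_idealOfVars_iff_coeff_zero]

lemma homogeneousComponent_mul_of_isHomogeneous [CommRing K] {p F : MvPolynomial σ K} {e : ℕ}
    (hF : F.IsHomogeneous e) (n : ℕ) :
    homogeneousComponent n (p * F) =
      (if e ≤ n then homogeneousComponent (n - e) p else 0) * F := by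
  let _ := MvPolynomial.gradedAlgebra (σ := σ) (R := K)
  have hdec (q : MvPolynomial σ K) (i : ℕ) :
      (DirectSum.decompose (homogeneousSubmodule σ K) q i : MvPolynomial σ K) =
        homogeneousComponent i q := decomposition.decompose'_apply q i
  rw [ite_mul, zero_mul, ← hdec, ← hdec,
    DirectSum.coe_decompose_mul_of_right_mem (homogeneousSubmodule σ K) n hF]

lemma homogeneousComponent_mem_syzygies [CommRing K] [Fintype ι] {F v : ι → MvPolynomial σ K}
    {e : ℕ} (hF : ∀ k, (F k).IsHomogeneous e) (hv : v ∈ syzygies F) (n : ℕ) :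
    (fun k => homogeneousComponent n (v k)) ∈ syzygies F := by
  rw [mem_syzygies, dotProduct] at hv ⊢
  simpa [homogeneousComponent_mul_of_isHomogeneous (hF _)] using
    congrArg (homogeneousComponent (n + e)) hv

lemma exists_finset_homogeneous_span_eq [Field K] [Finite σ] [Finite ι]
    {N : Submodule (MvPolynomial σ K) (ι → MvPolynomial σ K)}
    (hN : ∀ v ∈ N, ∀ n, (fun k => homogeneousComponent n (v k)) ∈ N) :
    ∃ T : Finset (ι → MvPolynomial σ K), (∀ v ∈ T, ∃ s, ∀ k, (v k).IsHomogeneous s) ∧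
      Submodule.span (MvPolynomial σ K) (T : Set (ι → MvPolynomial σ K)) = N := by
  have := Fintype.ofFinite ι
  set H := {v | v ∈ N ∧ ∃ s, ∀ k, (v k).IsHomogeneous s}
  have hH : Submodule.span (MvPolynomial σ K) H = N := by
    refine le_antisymm (Submodule.span_le.2 fun v hv => hv.1) fun v hv => ?_
    set b := Finset.univ.sup fun k => (v k).totalDegree
    have hsum : v = ∑ n ∈ Finset.range (b + 1), fun k => homogeneousComponent n (v k) := by
      ext1 k
      have hk : (v k).totalDegree ≤ b := Finset.le_sup (f := fun k => (v k).totalDegree)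
        (Finset.mem_univ k)
      rw [Finset.sum_apply]
      conv_lhs => rw [← sum_homogeneousComponent (v k)]
      refine Finset.sum_subset (Finset.range_mono (by lia)) fun n _ hn => ?_
      exact homogeneousComponent_eq_zero _ _ (by simpa using hn)
    rw [hsum]
    exact Submodule.sum_mem _ fun n _ => Submodule.subset_span
      ⟨hN v hv n, n, fun k => homogeneousComponent_isHomogeneous n (v k)⟩
  obtain ⟨T, hT, hspan⟩ := Submodule.fg_span_iff_fg_span_finset_subset H |>.1
    (IsNoetherian.noetherian (Submodule.span (MvPolynomial σ K) H))
  exact ⟨T, fun v hv => (hT hv).2, hspan.symm.trans hH⟩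

lemma mem_span_image_compl_of_coeff_zero_ne_zero [Field K] {κ : Type*} [Fintype κ]
    {v : κ → ι → MvPolynomial σ K} {s : κ → ℕ} (hv : ∀ i k, (v i k).IsHomogeneous (s i))
    {p : κ → MvPolynomial σ K} (hp : ∑ i, p i • v i = 0) {j : κ} (hj : coeff 0 (p j) ≠ 0) :
    v j ∈ Submodule.span (MvPolynomial σ K) (v '' {j}ᶜ) := by
  classical
  set q : κ → MvPolynomial σ K := fun i =>
    if s i ≤ s j then homogeneousComponent (s j - s i) (p i) else 0
  have hq : ∑ i, q i • v i = 0 := by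
    ext1 k
    simpa [homogeneousComponent_mul_of_isHomogeneous (hv _ k), q, -ite_smul] using
      congrArg (homogeneousComponent (s j)) (congrFun hp k)
  have hqj : IsUnit (q j) := by simpa [q] using hj
  rw [← Finset.add_sum_erase _ _ (Finset.mem_univ j), add_eq_zero_iff_eq_neg] at hq
  rw [← Submodule.smul_mem_iff_of_isUnit _ hqj, hq]
  exact Submodule.neg_mem _ (Submodule.sum_mem _ fun i hi => Submodule.smul_mem _ _
    (Submodule.subset_span ⟨i, Finset.ne_of_mem_erase hi, rfl⟩))

lemma exists_finset_homogeneous_span_eq_minimal [Field K] [Finite σ] [Finite ι]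
    {N : Submodule (MvPolynomial σ K) (ι → MvPolynomial σ K)}
    (hN : ∀ v ∈ N, ∀ n, (fun k => homogeneousComponent n (v k)) ∈ N) :
    ∃ T : Finset (ι → MvPolynomial σ K), (∀ v ∈ T, ∃ s, ∀ k, (v k).IsHomogeneous s) ∧
      Submodule.span (MvPolynomial σ K) (T : Set (ι → MvPolynomial σ K)) = N ∧
      ∀ p : T → MvPolynomial σ K, ∑ i, p i • (i : ι → MvPolynomial σ K) = 0 →
        ∀ i, p i ∈ idealOfVars σ K := by
  classical
  obtain ⟨T₀, hT₀⟩ := exists_finset_homogeneous_span_eq hN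
  obtain ⟨T, -, ⟨hhom, hspan⟩, hmin⟩ := exists_minimal_le_of_wellFoundedLT (fun T : Finset _ =>
    (∀ v ∈ T, ∃ s, ∀ k, (v k).IsHomogeneous s) ∧
      Submodule.span (MvPolynomial σ K) (T : Set (ι → MvPolynomial σ K)) = N) T₀ hT₀
  refine ⟨T, hhom, hspan, fun p hp j => ?_⟩
  by_contra hj
  choose! s hs using hhom
  have hmem : (j : ι → MvPolynomial σ K) ∈
      Submodule.span (MvPolynomial σ K) (T.erase j : Set (ι → MvPolynomial σ K)) := by
    refine Submodule.span_mono ?_ (mem_span_image_compl_of_coeff_zero_ne_zero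
      (fun i : T => hs i i.2) hp (mt mem_idealOfVars_iff_coeff_zero.2 hj))
    rintro _ ⟨i, hi, rfl⟩
    simpa using Subtype.coe_ne_coe.2 hi
  have hspan' : Submodule.span (MvPolynomial σ K) (T.erase j : Set (ι → MvPolynomial σ K)) = N := by
    rw [← hspan, ← Submodule.span_insert_eq_span hmem, ← Finset.coe_insert, Finset.insert_erase j.2]
  have hle : T ≤ T.erase j := hmin
    ⟨fun v hv => ⟨s v, hs v (Finset.mem_of_mem_erase hv)⟩, hspan'⟩ (Finset.erase_subset _ _)
  exact Finset.notMem_erase _ _ (hle j.2)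

end Graded

section Saturation

variable {σ K : Type*} [Field K]

lemma isRelPrime_X_X {i j : σ} (hij : i ≠ j) : IsRelPrime (X i : MvPolynomial σ K) (X j) := by
  rw [X_prime.irreducible.isRelPrime_iff_not_dvd, X_dvd_X]
  simpa using hij

lemma koszulExact_X : KoszulExact (X (R := K)) (MvPolynomial (Fin 3) K) := by
  refine koszulExact_self (isRelPrime_X_X (by decide)) fun p hp => ?_
  rw [← Set.image_pair (X : Fin 3 → MvPolynomial (Fin 3) K), mem_ideal_span_X_image] at hp ⊢
  intro m hm
  obtain ⟨i, hi, hmi⟩ := hp (m + Finsupp.single 0 1) (by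
    rwa [mem_support_iff, coeff_mul_X, ← mem_support_iff])
  have hi₀ : 0 ≠ i := by
    rintro rfl
    simp at hi
  exact ⟨i, hi, by simpa [hi₀] using hmi⟩

lemma colon_span_range_eq_self_iff {R κ : Type*} [CommRing R] {J : Ideal R} {r : κ → R} :
    J.colon (Ideal.span (Set.range r) : Set R) = J ↔ ∀ u, (∀ k, r k * u ∈ J) → u ∈ J := by
  have hmem (u : R) : u ∈ J.colon (Ideal.span (Set.range r) : Set R) ↔ ∀ k, r k * u ∈ J := by
    simp [Submodule.mem_colon, mul_comm]
  simp only [← hmem]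
  exact ⟨fun h u hu => h ▸ hu, fun h => le_antisymm h Ideal.le_colon⟩

lemma colon_span_X_eq_self_iff_koszulExact {ι : Type*} [Fintype ι]
    {F : ι → MvPolynomial (Fin 3) K} :
    (Ideal.span (Set.range F)).colon (Ideal.span (Set.range X) : Ideal (MvPolynomial (Fin 3) K)) =
      Ideal.span (Set.range F) ↔ KoszulExact (X (R := K)) (syzygies F) :=
  colon_span_range_eq_self_iff.trans
    (koszulExact_syzygies_iff koszulExact_X (isRelPrime_X_X (by decide)) (X_ne_zero _)).symm

lemma exists_homogeneous_basis_syzygies {ι : Type*} [Fintype ι] {F : ι → MvPolynomial (Fin 3) K}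
    {e : ℕ} (hF : ∀ k, (F k).IsHomogeneous e) (hsat : KoszulExact (X (R := K)) (syzygies F)) :
    ∃ T : Finset (ι → MvPolynomial (Fin 3) K), (∀ v ∈ T, ∃ s, ∀ k, (v k).IsHomogeneous s) ∧
      Submodule.span (MvPolynomial (Fin 3) K) (T : Set (ι → MvPolynomial (Fin 3) K)) =
        syzygies F ∧ T.card = Module.finrank (MvPolynomial (Fin 3) K) (syzygies F) := by
  obtain ⟨T, hhom, hspan, hrel⟩ := exists_finset_homogeneous_span_eq_minimal
    fun _ hv n => homogeneousComponent_mem_syzygies hF hv n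
  set v : T → syzygies F := fun i => ⟨i, hspan ▸ Submodule.subset_span i.2⟩
  have hv : Submodule.span (MvPolynomial (Fin 3) K) (Set.range v) = ⊤ := by
    refine Submodule.map_injective_of_injective (syzygies F).subtype_injective ?_
    rw [Submodule.map_span, ← Set.range_comp, Submodule.map_subtype_top]
    exact (congrArg _ Subtype.range_coe).trans hspan
  have hindep := hsat.linearIndependent idealOfVars_ne_top hv fun p hp =>
    hrel p (by simpa [v] using congrArg Subtype.val hp)
  have hcard := Module.finrank_eq_card_basis (Module.Basis.mk hindep hv.ge)
  exact ⟨T, hhom, hspan, by rw [hcard, Fintype.card_coe]⟩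

lemma exists_homogeneous_pair_span_eq_syzygies {F : Fin 3 → MvPolynomial (Fin 3) K} {e : ℕ}
    (hF : ∀ k, (F k).IsHomogeneous e) (hF₀ : F ≠ 0) (hsat : KoszulExact (X (R := K)) (syzygies F)) :
    ∃ (μ ν : Fin 3 → MvPolynomial (Fin 3) K) (s t : ℕ), (∀ k, (μ k).IsHomogeneous s) ∧
      (∀ k, (ν k).IsHomogeneous t) ∧
      Submodule.span (MvPolynomial (Fin 3) K) {μ, ν} = syzygies F := by
  classical
  obtain ⟨T, hhom, hspan, hcard⟩ := exists_homogeneous_basis_syzygies hF hsat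
  have hrank := finrank_syzygies_add_one hF₀
  rw [Fintype.card_fin] at hrank
  obtain ⟨μ, ν, -, rfl⟩ := Finset.card_eq_two.1 (hcard.trans (by lia))
  obtain ⟨s, hs⟩ := hhom μ (by simp)
  obtain ⟨t, ht⟩ := hhom ν (by simp)
  exact ⟨μ, ν, s, t, hs, ht, by simpa using hspan⟩

end Saturation

section LinearForms

variable {σ K : Type*} [Field K]

lemma exists_eq_dotProduct_X [Fintype σ] {h : MvPolynomial σ K} (hh : h.IsHomogeneous 1) :
    ∃ c : σ → K, h = (C ∘ c) ⬝ᵥ X := by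
  rw [← mem_homogeneousSubmodule, homogeneousSubmodule_one_eq_span_X,
    Submodule.mem_span_range_iff_exists_fun] at hh
  obtain ⟨c, hc⟩ := hh
  exact ⟨c, by simp [← hc, smul_eq_C_mul, dotProduct]⟩

lemma irreducible_of_isHomogeneous_one_s16 {h : MvPolynomial σ K} (hh : h.IsHomogeneous 1)
    (h₀ : h ≠ 0) : Irreducible h := by
  refine irreducible_of_totalDegree_eq_one (hh.totalDegree h₀) fun x hx => ?_
  rw [isUnit_iff_ne_zero]
  rintro rfl
  exact h₀ (MvPolynomial.ext _ _ fun m => by simpa using hx m)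

end LinearForms

section CrossProduct

variable {R : Type*} [CommRing R]

lemma crossProduct_apply_cyclic (u v : Fin 3 → R) (i : Fin 3) :
    (u ⨯₃ v) i = u (i + 1) * v (i + 2) - u (i + 2) * v (i + 1) := by
  fin_cases i <;> rfl

lemma dotProduct_cross_smul (θ u v w : Fin 3 → R) :
    (θ ⬝ᵥ u ⨯₃ v) • w = (θ ⬝ᵥ w) • u ⨯₃ v + (u ⬝ᵥ w) • v ⨯₃ θ + (v ⬝ᵥ w) • θ ⨯₃ u := by
  ext i
  fin_cases i <;>
    simp [crossProduct_apply_cyclic, dotProduct, Fin.sum_univ_three] <;> ring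

end CrossProduct

section PointIdeal

variable {K : Type*} [Field K] {a : Fin 3 → K}

/-- The linear forms `aᵢ₊₂ xᵢ₊₁ - aᵢ₊₁ xᵢ₊₂` (indices modulo `3`) vanishing at the point `a`,
arranged as the cross product of the vector of variables with `a`. -/
noncomputable def pointForms (a : Fin 3 → K) : Fin 3 → MvPolynomial (Fin 3) K :=
  X ⨯₃ (C ∘ a)

lemma pointForms_apply (a : Fin 3 → K) (i : Fin 3) :
    pointForms a i = X (i + 1) * C (a (i + 2)) - X (i + 2) * C (a (i + 1)) :=
  crossProduct_apply_cyclic _ _ i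

lemma isHomogeneous_pointForms (a : Fin 3 → K) (i : Fin 3) : (pointForms a i).IsHomogeneous 1 := by
  rw [pointForms_apply]
  exact ((isHomogeneous_X _ _).mul (isHomogeneous_C _ _)).sub
    ((isHomogeneous_X _ _).mul (isHomogeneous_C _ _))

lemma eval_pointForms (a : Fin 3 → K) (i : Fin 3) : eval a (pointForms a i) = 0 := by
  simp [pointForms_apply, mul_comm]

lemma X_dotProduct_pointForms (a : Fin 3 → K) : X ⬝ᵥ pointForms a = 0 :=
  dot_self_cross _ _

lemma C_dotProduct_pointForms (a : Fin 3 → K) : (C ∘ a) ⬝ᵥ pointForms a = 0 :=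
  dot_cross_self _ _

lemma pointForms_ne_zero {i : Fin 3} (hi : a i ≠ 0) : pointForms a (i + 2) ≠ 0 := fun h => by
  simpa [pointForms_apply, add_assoc, Pi.single_apply, hi] using
    congrArg (eval (Pi.single (i + 1) 1)) h

lemma isRelPrime_pointForms {i : Fin 3} (hi : a i ≠ 0) :
    IsRelPrime (pointForms a (i + 1)) (pointForms a (i + 2)) := by
  have hne : pointForms a (i + 1) ≠ 0 := fun h => by
    simpa [pointForms_apply, add_assoc, Pi.single_apply, hi] using
      congrArg (eval (Pi.single (i + 2) 1)) h
  rw [(irreducible_of_isHomogeneous_one_s16 (isHomogeneous_pointForms a _) hne).isRelPrime_iff_not_dvd]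
  rintro ⟨q, hq⟩
  simpa [pointForms_apply, add_assoc, Pi.single_apply, hi] using
    congrArg (eval (Pi.single (i + 1) 1)) hq

lemma mem_pointIdeal_of_isHomogeneous_one {m : ℕ} {a : Fin m → K} {h : MvPolynomial (Fin m) K}
    (hh : h.IsHomogeneous 1) (hha : eval a h = 0) : h ∈ pointIdeal a :=
  Ideal.subset_span ⟨hh, hha⟩

/- For a linear form `h = c ⬝ᵥ X` vanishing at `a`, the triple product expansion of
`c × (X × a)` is `-h • a`. -/
lemma pointIdeal_eq_span_pointForms (ha : a ≠ 0) :
    pointIdeal a = Ideal.span (Set.range (pointForms a)) := by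
  obtain ⟨i, hi⟩ := Function.ne_iff.1 ha
  refine le_antisymm (Ideal.span_le.2 ?_) (Ideal.span_le.2 ?_)
  · rintro h ⟨hh, hha⟩
    obtain ⟨c, rfl⟩ := exists_eq_dotProduct_X hh
    have hca : (C ∘ c) ⬝ᵥ (C ∘ a : Fin 3 → MvPolynomial (Fin 3) K) = 0 := by
      simpa [dotProduct] using congrArg (C (σ := Fin 3)) hha
    have hcross : (C ∘ c) ⬝ᵥ X * C (a i) = -((C ∘ c) ⨯₃ pointForms a) i := by
      rw [pointForms, cross_cross_eq_smul_sub_smul', hca, dotProduct_comm X]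
      simp
    rw [SetLike.mem_coe, ← Ideal.mul_unit_mem_iff_mem _ ((isUnit_iff_ne_zero.2 hi).map C), hcross,
      crossProduct_apply_cyclic, neg_sub]
    exact sub_mem (Ideal.mul_mem_left _ _ (Ideal.subset_span ⟨_, rfl⟩))
      (Ideal.mul_mem_left _ _ (Ideal.subset_span ⟨_, rfl⟩))
  · rintro _ ⟨i, rfl⟩
    exact mem_pointIdeal_of_isHomogeneous_one (isHomogeneous_pointForms a i) (eval_pointForms a i)

lemma pointIdeal_eq_span_pair {i : Fin 3} (hi : a i ≠ 0) :
    pointIdeal a = Ideal.span {pointForms a (i + 1), pointForms a (i + 2)} := by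
  rw [pointIdeal_eq_span_pointForms fun h => hi (congrFun h i)]
  refine le_antisymm (Ideal.span_le.2 ?_) (Ideal.span_mono ?_)
  · have hsum : C (a i) * pointForms a i = -(C (a (i + 1)) * pointForms a (i + 1) +
        C (a (i + 2)) * pointForms a (i + 2)) := by
      simp only [pointForms_apply, add_assoc, Fin.reduceAdd, add_zero]
      ring
    rintro _ ⟨j, rfl⟩
    obtain rfl | rfl | rfl : j = i ∨ j = i + 1 ∨ j = i + 2 := by lia
    · rw [SetLike.mem_coe, ← Ideal.unit_mul_mem_iff_mem _ ((isUnit_iff_ne_zero.2 hi).map C), hsum]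
      exact neg_mem (Ideal.mem_span_pair.2 ⟨_, _, rfl⟩)
    all_goals exact Ideal.subset_span (by simp)
  · simp [Set.insert_subset_iff]

lemma eval_eq_zero_of_mem_pointIdeal {m : ℕ} {a : Fin m → K} {p : MvPolynomial (Fin m) K}
    (hp : p ∈ pointIdeal a) : eval a p = 0 := by
  have hle : pointIdeal a ≤ RingHom.ker (eval a) := Ideal.span_le.2 fun h hh => hh.2
  exact hle hp

/- `pointIdeal a` is the kernel of the restriction to the line through `0` and `a`, parametrised
by the coordinate `x i`. -/
lemma pointIdeal_isPrime (ha : a ≠ 0) : (pointIdeal a).IsPrime := by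
  obtain ⟨i, hi⟩ := Function.ne_iff.1 ha
  set ψ : MvPolynomial (Fin 3) K →+* MvPolynomial (Fin 3) K :=
    eval₂Hom C fun l => C (a l * (a i)⁻¹) * X i
  have hker : RingHom.ker ψ = pointIdeal a := by
    refine le_antisymm (fun p hp => ?_) ?_
    · have hX (l : Fin 3) : X l - ψ (X l) ∈ pointIdeal a := by
        refine mem_pointIdeal_of_isHomogeneous_one ?_ ?_
        · rw [eval₂Hom_X']
          exact (isHomogeneous_X K l).sub (isHomogeneous_C_mul_X _ _)
        · rw [eval₂Hom_X', map_sub, map_mul, eval_X, eval_X, eval_C, mul_assoc, inv_mul_cancel₀ hi,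
            mul_one, sub_self]
      have hsub (q : MvPolynomial (Fin 3) K) : q - ψ q ∈ pointIdeal a := by
        induction q using MvPolynomial.induction_on with
        | C c => simp [ψ]
        | add q₁ q₂ h₁ h₂ =>
          rw [map_add, add_sub_add_comm]
          exact add_mem h₁ h₂
        | mul_X q l hq =>
          rw [map_mul, show q * X l - ψ q * ψ (X l) =
            (q - ψ q) * X l + ψ q * (X l - ψ (X l)) by ring]
          exact add_mem (Ideal.mul_mem_right _ _ hq) (Ideal.mul_mem_left _ _ (hX l))
      simpa [RingHom.mem_ker.1 hp] using hsub p
    · rw [pointIdeal_eq_span_pointForms ha, Ideal.span_le]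
      rintro _ ⟨j, rfl⟩
      simp only [pointForms_apply, ψ, SetLike.mem_coe, RingHom.mem_ker, map_sub, map_mul,
        eval₂Hom_X', eval₂Hom_C]
      ring
  exact hker ▸ RingHom.ker_isPrime ψ

lemma mem_pointIdeal_of_mul_mem (ha : a ≠ 0) {f t : MvPolynomial (Fin 3) K} (hf : eval a f ≠ 0)
    (h : t * f ∈ pointIdeal a) : t ∈ pointIdeal a :=
  ((pointIdeal_isPrime ha).mem_or_mem h).resolve_right (mt eval_eq_zero_of_mem_pointIdeal hf)

/- The triple product expansions show that `(a × θ) × (X × a) = 0`, so `a × θ` is a multiple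
`w • (X × a)`, and then `θ + w • X` is parallel to `a`. -/
lemma exists_eq_of_dotProduct_pointForms_eq_zero (ha : a ≠ 0) {θ : Fin 3 → MvPolynomial (Fin 3) K}
    (h : θ ⬝ᵥ pointForms a = 0) :
    ∃ p q : MvPolynomial (Fin 3) K, θ = p • X + q • (C ∘ a) := by
  obtain ⟨i, hi⟩ := Function.ne_iff.1 ha
  set A : Fin 3 → MvPolynomial (Fin 3) K := C ∘ a
  have hcross : pointForms a ⨯₃ (A ⨯₃ θ) = 0 := by
    rw [cross_cross_eq_smul_sub_smul', dotProduct_comm _ θ, h, C_dotProduct_pointForms]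
    simp
  obtain ⟨w, hw⟩ := exists_eq_smul_of_cross_eq_zero (isRelPrime_pointForms hi)
    (pointForms_ne_zero hi) (w := fun j (_ : Unit) => (A ⨯₃ θ) j) fun j => funext fun _ => by
      simpa [crossProduct_apply_cyclic, sub_eq_zero] using congrFun hcross j
  have hw' (j : Fin 3) := congrFun (hw j) ()
  simp only [crossProduct_apply_cyclic, pointForms_apply, Pi.smul_apply, smul_eq_mul] at hw'
  have hpar (j : Fin 3) : A i * (θ j + w () * X j) = A j * (θ i + w () * X i) := by
    have h₁ := hw' (i + 1)
    have h₂ := hw' (i + 2)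
    simp only [add_assoc, Fin.reduceAdd, add_zero] at h₁ h₂
    obtain rfl | rfl | rfl : j = i ∨ j = i + 1 ∨ j = i + 2 := by lia
    · rfl
    · simp only [A, Function.comp_apply] at h₂ ⊢
      linear_combination h₂
    · simp only [A, Function.comp_apply] at h₁ ⊢
      linear_combination -h₁
  refine ⟨-w (), C (a i)⁻¹ * (θ i + w () * X i), funext fun j => ?_⟩
  have hinv : C (σ := Fin 3) (a i)⁻¹ * A i = 1 := by
    rw [← C_1, ← inv_mul_cancel₀ hi, C_mul]
    rfl
  simp only [Pi.add_apply, Pi.smul_apply, smul_eq_mul]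
  linear_combination C (a i)⁻¹ * hpar j - (θ j + w () * X j) * hinv

end PointIdeal

section Derivatives

variable {K : Type*} [CommRing K]

/-- The gradient of a polynomial; its entries generate the Jacobian ideal. -/
noncomputable def grad {σ : Type*} (f : MvPolynomial σ K) : σ → MvPolynomial σ K :=
  fun i => pderiv i f

variable {m d : ℕ} {f : MvPolynomial (Fin m) K}

lemma C_dotProduct_grad (a : Fin m → K) (f : MvPolynomial (Fin m) K) :
    (C ∘ a) ⬝ᵥ grad f = lderiv a f := by
  simp [lderiv, grad, dotProduct, smul_eq_C_mul]

lemma X_dotProduct_grad (hf : f.IsHomogeneous d) : X ⬝ᵥ grad f = d * f := by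
  simpa [dotProduct, grad] using hf.sum_X_mul_pderiv

lemma isHomogeneous_grad (hf : f.IsHomogeneous d) (i : Fin m) :
    (grad f i).IsHomogeneous (d - 1) :=
  hf.pderiv

lemma isHomogeneous_lderiv (hf : f.IsHomogeneous d) (a : Fin m → K) :
    (lderiv a f).IsHomogeneous (d - 1) := by
  simp only [lderiv, smul_eq_C_mul]
  exact IsHomogeneous.sum _ _ _ fun i _ => hf.pderiv.C_mul _

lemma lderiv_mul (a : Fin m → K) (f g : MvPolynomial (Fin m) K) :
    lderiv a (f * g) = f * lderiv a g + g * lderiv a f := by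
  simp [lderiv, Derivation.leibniz, Finset.sum_add_distrib, Finset.mul_sum]

lemma eval_lderiv_self (hf : f.IsHomogeneous d) (a : Fin m → K) :
    eval a (lderiv a f) = d * eval a f := by
  simpa [lderiv, dotProduct, grad, smul_eval] using congrArg (eval a) (X_dotProduct_grad hf)

lemma lderiv_of_isHomogeneous_one (hf : f.IsHomogeneous 1) (a : Fin m → K) :
    lderiv a f = C (eval a f) := by
  have hconst := totalDegree_eq_zero_iff_eq_C.1
    (Nat.le_zero.1 (isHomogeneous_lderiv hf a).totalDegree_le)
  have heval := eval_lderiv_self hf a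
  rw [hconst, eval_C, Nat.cast_one, one_mul] at heval
  rw [hconst, heval]

lemma mem_genResidual_iff_s16 {a : Fin m → K} {g : MvPolynomial (Fin m) K} :
    g ∈ genResidual a f ↔ ∀ i, g * grad f i ∈ Ideal.span {f, lderiv a f} := by
  simp [genResidual, jacobianIdeal, Submodule.mem_colon, grad]

end Derivatives

section PositiveDegree

variable {σ K : Type*} [Field K] {d : ℕ}

lemma ne_zero_of_eval_ne_zero {f : MvPolynomial σ K} {a : σ → K} (hf : f.IsHomogeneous d)
    (hd : d ≠ 0) (ha : eval a f ≠ 0) : a ≠ 0 := by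
  rintro rfl
  exact ha (by rw [eval_zero, constantCoeff_eq, hf.coeff_eq_zero (by simpa using hd.symm)])

lemma not_isUnit_of_isHomogeneous {f : MvPolynomial σ K} (hf : f.IsHomogeneous d) (hd : d ≠ 0) :
    ¬IsUnit f :=
  fun h => ne_zero_of_eval_ne_zero (a := 0) hf hd (h.map (eval 0)).ne_zero rfl

lemma C_inv_natCast_mul [CharZero K] (hd : d ≠ 0) :
    C (d : K)⁻¹ * (d : MvPolynomial σ K) = 1 := by
  rw [← map_natCast C, ← C_mul, inv_mul_cancel₀ (Nat.cast_ne_zero.2 hd), C_1]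

end PositiveDegree

section NonConical

variable {K : Type*} [Field K] {d m : ℕ} {f : MvPolynomial (Fin m) K}

lemma degree_ne_zero_of_lderiv_ne_zero [NeZero m] (hf : f.IsHomogeneous d)
    (hcone : ∀ q, lderiv q f = 0 → q = 0) : d ≠ 0 := by
  rintro rfl
  rw [totalDegree_eq_zero_iff_eq_C.1 (Nat.le_zero.1 hf.totalDegree_le)] at hcone
  exact one_ne_zero (α := Fin m → K) (hcone 1 (by simp [lderiv]))

lemma pos_of_isHomogeneous_of_mem_syzygies (hcone : ∀ q, lderiv q f = 0 → q = 0)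
    {μ : Fin m → MvPolynomial (Fin m) K} {s : ℕ} (hμ : μ ∈ syzygies (grad f)) (hμ₀ : μ ≠ 0)
    (hμs : ∀ k, (μ k).IsHomogeneous s) : 0 < s := by
  refine Nat.pos_of_ne_zero ?_
  rintro rfl
  have hconst : μ = C ∘ fun k => coeff 0 (μ k) := funext fun k =>
    totalDegree_eq_zero_iff_eq_C.1 (Nat.le_zero.1 (hμs k).totalDegree_le)
  rw [mem_syzygies, hconst, C_dotProduct_grad] at hμ
  refine hμ₀ (hconst.trans (funext fun k => ?_))
  rw [hcone _ hμ, Function.comp_apply, Pi.zero_apply, C_0, Pi.zero_apply]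

end NonConical

section SquarefreeForms

variable {K : Type*} [Field K] {m d : ℕ} {f p : MvPolynomial (Fin m) K} {a : Fin m → K}

lemma dvd_lderiv_self (hp : Irreducible p) (hf : Squarefree f) (hpf : p ∣ f)
    (hpf' : p ∣ lderiv a f) : p ∣ lderiv a p := by
  obtain ⟨q, rfl⟩ := hpf
  rw [lderiv_mul, dvd_add_right (dvd_mul_right _ _)] at hpf'
  refine (hp.prime.dvd_or_dvd hpf').resolve_left fun hpq => hp.not_isUnit (hf p ?_)
  exact mul_dvd_mul_left p hpq

/- Such a `p` divides all the iterated derivatives of `f` along `a`, hence also the nonzero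
constant `d! * f(a)`. -/
lemma isUnit_of_dvd_lderiv_self [CharZero K] (hp : p ∣ lderiv a p) (hf : f.IsHomogeneous d)
    (hpf : p ∣ f) (ha : eval a f ≠ 0) : IsUnit p := by
  induction d generalizing f with
  | zero =>
    rw [totalDegree_eq_zero_iff_eq_C.1 (Nat.le_zero.1 hf.totalDegree_le)] at hpf ha
    rw [eval_C] at ha
    exact isUnit_of_dvd_unit hpf ((isUnit_iff_ne_zero.2 ha).map C)
  | succ d ih =>
    refine ih (isHomogeneous_lderiv hf a) ?_ ?_
    · obtain ⟨q, rfl⟩ := hpf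
      rw [lderiv_mul]
      exact dvd_add (dvd_mul_right _ _) (hp.mul_left q)
    · rw [eval_lderiv_self hf]
      exact mul_ne_zero (Nat.cast_ne_zero.2 d.succ_ne_zero) ha

lemma isRelPrime_lderiv [CharZero K] (hf : f.IsHomogeneous d) (hsq : Squarefree f)
    (ha : eval a f ≠ 0) : IsRelPrime f (lderiv a f) := by
  have hf₀ : f ≠ 0 := fun h => ha (by simp [h])
  refine WfDvdMonoid.isRelPrime_of_no_irreducible_factors (fun h => hf₀ h.1)
    fun p hp hpf hpf' => hp.not_isUnit ?_
  exact isUnit_of_dvd_lderiv_self (dvd_lderiv_self hp hsq hpf hpf') hf hpf ha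

end SquarefreeForms

section Residual

variable {K : Type*} [Field K] {d : ℕ} {f : MvPolynomial (Fin 3) K} {a : Fin 3 → K}

lemma sub_mem_span_pair_lderiv (hf : f.IsHomogeneous d) (θ : Fin 3 → MvPolynomial (Fin 3) K)
    (k : Fin 3) :
    θ ⬝ᵥ pointForms a * grad f k - θ ⬝ᵥ grad f * pointForms a k ∈
      Ideal.span {f, lderiv a f} := by
  have h := congrFun (dotProduct_cross_smul θ X (C ∘ a) (grad f)) k
  rw [X_dotProduct_grad hf, C_dotProduct_grad] at h
  simp only [Pi.add_apply, Pi.smul_apply, smul_eq_mul] at h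
  refine Ideal.mem_span_pair.2 ⟨d * ((C ∘ a) ⨯₃ θ) k, (θ ⨯₃ X) k, ?_⟩
  simp only [pointForms]
  linear_combination -h

lemma grad_cross_pointForms (hf : f.IsHomogeneous d) :
    grad f ⨯₃ pointForms a = lderiv a f • X - (d * f) • (C ∘ a) := by
  rw [pointForms, cross_cross_eq_smul_sub_smul', dotProduct_comm _ (C ∘ a), C_dotProduct_grad,
    X_dotProduct_grad hf]

lemma grad_cross_mem_syzygies (v : Fin 3 → MvPolynomial (Fin 3) K) :
    grad f ⨯₃ v ∈ syzygies (grad f) := by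
  rw [mem_syzygies, dotProduct_comm, dot_self_cross]

lemma dotProduct_pointForms_mem_pointIdeal (ha : a ≠ 0) (θ : Fin 3 → MvPolynomial (Fin 3) K) :
    θ ⬝ᵥ pointForms a ∈ pointIdeal a := by
  rw [pointIdeal_eq_span_pointForms ha]
  exact mem_span_range_iff_exists_dotProduct.2 ⟨θ, rfl⟩

lemma one_notMem_pointIdeal : (1 : MvPolynomial (Fin 3) K) ∉ pointIdeal a := fun h =>
  one_ne_zero (α := K) (by simpa using eval_eq_zero_of_mem_pointIdeal h)

lemma isHomogeneous_dotProduct_pointForms {s : ℕ} {μ : Fin 3 → MvPolynomial (Fin 3) K}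
    (hμ : ∀ k, (μ k).IsHomogeneous s) (a : Fin 3 → K) :
    (μ ⬝ᵥ pointForms a).IsHomogeneous (s + 1) :=
  IsHomogeneous.sum _ _ _ fun k _ => (hμ k).mul (isHomogeneous_pointForms a k)

lemma isHomogeneous_grad_cross_pointForms (hf : f.IsHomogeneous d) (hd : d ≠ 0) (k : Fin 3) :
    ((grad f ⨯₃ pointForms a) k).IsHomogeneous d := by
  rw [crossProduct_apply_cyclic, ← Nat.sub_one_add_one hd]
  exact ((isHomogeneous_grad hf _).mul (isHomogeneous_pointForms a _)).sub
    ((isHomogeneous_grad hf _).mul (isHomogeneous_pointForms a _))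

variable [CharZero K]

lemma exists_mem_syzygies_of_mem_span_pair (hf : f.IsHomogeneous d) (hd : d ≠ 0)
    {b : Fin 3 → MvPolynomial (Fin 3) K} (hb : b ⬝ᵥ grad f ∈ Ideal.span {f, lderiv a f}) :
    ∃ θ ∈ syzygies (grad f), θ ⬝ᵥ pointForms a = b ⬝ᵥ pointForms a := by
  obtain ⟨p, q, hpq⟩ := Ideal.mem_span_pair.1 hb
  refine ⟨b - (C (d : K)⁻¹ * p) • X - q • (C ∘ a), ?_, ?_⟩
  · simp only [mem_syzygies, sub_dotProduct, smul_dotProduct, X_dotProduct_grad hf,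
      C_dotProduct_grad, smul_eq_mul]
    linear_combination -hpq - p * f * C_inv_natCast_mul (K := K) hd
  · simp [sub_dotProduct, smul_dotProduct, X_dotProduct_pointForms, C_dotProduct_pointForms]

/- The image of the syzygies of the gradient under `θ ↦ θ ⬝ᵥ pointForms a`. -/
lemma mem_genResidual_inf_pointIdeal_iff (hf : f.IsHomogeneous d) (hd : d ≠ 0)
    (hsq : Squarefree f) (ha : eval a f ≠ 0) {g : MvPolynomial (Fin 3) K} :
    g ∈ genResidual a f ⊓ pointIdeal a ↔
      ∃ θ ∈ syzygies (grad f), θ ⬝ᵥ pointForms a = g := by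
  have ha₀ := ne_zero_of_eval_ne_zero hf hd ha
  obtain ⟨i, hi⟩ := Function.ne_iff.1 ha₀
  constructor
  · rintro ⟨hg, hga⟩
    rw [SetLike.mem_coe, pointIdeal_eq_span_pointForms ha₀,
      mem_span_range_iff_exists_dotProduct] at hga
    obtain ⟨b, rfl⟩ := hga
    refine exists_mem_syzygies_of_mem_span_pair hf hd ?_
    have hmul (k : Fin 3) : b ⬝ᵥ grad f * pointForms a k ∈ Ideal.span {f, lderiv a f} :=
      (Submodule.sub_mem_iff_right _ (mem_genResidual_iff_s16.1 hg k)).1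
        (sub_mem_span_pair_lderiv hf b k)
    refine mem_span_pair_of_mul_mem_span_pair (isRelPrime_lderiv hf hsq ha)
      (isRelPrime_pointForms hi).symm (pointForms_ne_zero hi) (fun t => ?_) (hmul _) (hmul _)
    rw [Set.pair_comm, ← pointIdeal_eq_span_pair hi]
    exact mem_pointIdeal_of_mul_mem ha₀ ha
  · rintro ⟨θ, hθ, rfl⟩
    refine ⟨mem_genResidual_iff_s16.2 fun k => ?_, dotProduct_pointForms_mem_pointIdeal ha₀ θ⟩
    simpa [mem_syzygies.1 hθ] using sub_mem_span_pair_lderiv (a := a) hf θ k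

lemma exists_eq_smul_grad_cross_pointForms (hf : f.IsHomogeneous d) (hd : d ≠ 0)
    (hsq : Squarefree f) (ha : eval a f ≠ 0) {θ : Fin 3 → MvPolynomial (Fin 3) K}
    (hθ : θ ∈ syzygies (grad f)) (hθa : θ ⬝ᵥ pointForms a = 0) :
    ∃ c : MvPolynomial (Fin 3) K, θ = c • grad f ⨯₃ pointForms a := by
  obtain ⟨p, q, rfl⟩ :=
    exists_eq_of_dotProduct_pointForms_eq_zero (ne_zero_of_eval_ne_zero hf hd ha) hθa
  rw [mem_syzygies, add_dotProduct, smul_dotProduct, smul_dotProduct, X_dotProduct_grad hf,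
    C_dotProduct_grad, smul_eq_mul, smul_eq_mul] at hθ
  obtain ⟨w, hp, hq⟩ := exists_eq_mul_of_isRelPrime (s := d * p) (t := -q)
    (isRelPrime_lderiv hf hsq ha) (by linear_combination hθ)
  refine ⟨C (d : K)⁻¹ * w, ?_⟩
  rw [grad_cross_pointForms hf, neg_eq_iff_eq_neg.1 hq]
  ext1 k
  simp only [Pi.add_apply, Pi.sub_apply, Pi.smul_apply, smul_eq_mul]
  linear_combination X k * C (d : K)⁻¹ * hp +
    (w * f * (C ∘ a) k - p * X k) * C_inv_natCast_mul (K := K) hd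

lemma grad_cross_pointForms_ne_zero (hf : f.IsHomogeneous d) (hd : d ≠ 0)
    (hsq : Squarefree f) (ha : eval a f ≠ 0) : grad f ⨯₃ pointForms a ≠ 0 := by
  rw [grad_cross_pointForms hf, sub_ne_zero]
  intro h
  have hdvd (j : Fin 3) : f ∣ X j := by
    refine (isRelPrime_lderiv hf hsq ha).dvd_of_dvd_mul_left ⟨(d : MvPolynomial _ K) * C (a j), ?_⟩
    have hj := congrFun h j
    simp only [Pi.smul_apply, smul_eq_mul, Function.comp_apply] at hj
    rw [hj, mul_left_comm, mul_assoc]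
  exact not_isUnit_of_isHomogeneous hf hd
    (isRelPrime_X_X (show (0 : Fin 3) ≠ 1 by decide) (hdvd 0) (hdvd 1))

lemma isRelPrime_of_genResidual_inf_pointIdeal_eq (hf : f.IsHomogeneous d) (hd : d ≠ 0)
    (hsq : Squarefree f) (ha : eval a f ≠ 0) {g h : MvPolynomial (Fin 3) K}
    (hI : genResidual a f ⊓ pointIdeal a = Ideal.span {g, h}) : IsRelPrime g h := by
  obtain ⟨i, hi⟩ := Function.ne_iff.1 (ne_zero_of_eval_ne_zero hf hd ha)
  refine isRelPrime_of_mul_mem_span_pair (isRelPrime_lderiv hf hsq ha)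
    (isRelPrime_pointForms hi) fun p hp q hq => hI ▸ ⟨?_, ?_⟩
  · exact Ideal.mul_mem_left _ _ (Ideal.le_colon (Ideal.subset_span hq))
  · rw [SetLike.mem_coe, pointIdeal_eq_span_pair hi]
    exact Ideal.mul_mem_right _ _ (Ideal.subset_span hp)

end Residual

section Generators

variable {K : Type*} [Field K] [CharZero K] {d s t : ℕ} {f : MvPolynomial (Fin 3) K}
  {a : Fin 3 → K} {μ ν : Fin 3 → MvPolynomial (Fin 3) K}

lemma exists_of_smul_add_smul_dotProduct_eq_zero {R ι : Type*} [CommRing R] [IsDomain R]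
    [DecompositionMonoid R] [Fintype ι] {u v w : ι → R} (huv : IsRelPrime (u ⬝ᵥ w) (v ⬝ᵥ w))
    {p q : R} (h : (p • u + q • v) ⬝ᵥ w = 0) :
    ∃ r, p = r * v ⬝ᵥ w ∧ q = -(r * u ⬝ᵥ w) := by
  simp only [add_dotProduct, smul_dotProduct, smul_eq_mul] at h
  obtain ⟨r, hp, hq⟩ := exists_eq_mul_of_isRelPrime (s := p) (t := -q) huv
    (by linear_combination h)
  exact ⟨r, by rw [hp, mul_comm], by rw [neg_eq_iff_eq_neg.1 hq, mul_comm]⟩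

/- If the coefficient vanished, coprimality of the two generators would make `μ` a multiple of
`μ ⬝ᵥ pointForms a`, so `1` would lie in `pointIdeal a`. -/
lemma exists_smul_sub_smul_eq_smul_grad_cross (hf : f.IsHomogeneous d) (hd : d ≠ 0)
    (hsq : Squarefree f) (ha : eval a f ≠ 0) (hμ : μ ∈ syzygies (grad f))
    (hν : ν ∈ syzygies (grad f))
    (hI : genResidual a f ⊓ pointIdeal a =
      Ideal.span {μ ⬝ᵥ pointForms a, ν ⬝ᵥ pointForms a}) :
    ∃ c : MvPolynomial (Fin 3) K, c ≠ 0 ∧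
      (ν ⬝ᵥ pointForms a) • μ - (μ ⬝ᵥ pointForms a) • ν = c • grad f ⨯₃ pointForms a := by
  have hrel := isRelPrime_of_genResidual_inf_pointIdeal_eq hf hd hsq ha hI
  have ha₀ := ne_zero_of_eval_ne_zero hf hd ha
  obtain ⟨c, hc⟩ := exists_eq_smul_grad_cross_pointForms hf hd hsq ha
    (sub_mem (Submodule.smul_mem _ (ν ⬝ᵥ pointForms a) hμ)
      (Submodule.smul_mem _ (μ ⬝ᵥ pointForms a) hν))
    (by simp only [sub_dotProduct, smul_dotProduct, smul_eq_mul]; ring)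
  refine ⟨c, ?_, hc⟩
  rintro rfl
  rw [zero_smul, sub_eq_zero] at hc
  choose ρ hρ using fun k => hrel.dvd_of_dvd_mul_left ⟨ν k, congrFun hc k⟩
  have hμρ : μ ⬝ᵥ pointForms a = μ ⬝ᵥ pointForms a * ρ ⬝ᵥ pointForms a := by
    conv_lhs => rw [show μ = (μ ⬝ᵥ pointForms a) • ρ from funext hρ, smul_dotProduct, smul_eq_mul]
  rcases eq_or_ne (μ ⬝ᵥ pointForms a) 0 with h₀ | h₀
  · rw [h₀] at hrel
    exact one_notMem_pointIdeal (Ideal.eq_top_iff_one _ |>.1 (Ideal.eq_top_of_isUnit_mem _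
      (dotProduct_pointForms_mem_pointIdeal ha₀ ν) (isRelPrime_zero_left.1 hrel)))
  · rw [left_eq_mul₀ h₀] at hμρ
    exact one_notMem_pointIdeal (hμρ ▸ dotProduct_pointForms_mem_pointIdeal ha₀ ρ)

lemma linearIndependent_of_genResidual_inf_pointIdeal_eq (hf : f.IsHomogeneous d) (hd : d ≠ 0)
    (hsq : Squarefree f) (ha : eval a f ≠ 0) (hμ : μ ∈ syzygies (grad f))
    (hν : ν ∈ syzygies (grad f))
    (hI : genResidual a f ⊓ pointIdeal a =
      Ideal.span {μ ⬝ᵥ pointForms a, ν ⬝ᵥ pointForms a}) :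
    LinearIndependent (MvPolynomial (Fin 3) K) ![μ, ν] := by
  obtain ⟨c, hc₀, hc⟩ := exists_smul_sub_smul_eq_smul_grad_cross hf hd hsq ha hμ hν hI
  refine LinearIndependent.pair_iff.2 fun p q hpq => ?_
  obtain ⟨w, rfl, rfl⟩ := exists_of_smul_add_smul_dotProduct_eq_zero
    (isRelPrime_of_genResidual_inf_pointIdeal_eq hf hd hsq ha hI) (by rw [hpq, zero_dotProduct])
  have hw : (w * c) • grad f ⨯₃ pointForms a = 0 := by
    rw [mul_smul, ← hc, ← hpq]
    module
  have hw₀ : w = 0 := by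
    simpa [hc₀, grad_cross_pointForms_ne_zero hf hd hsq ha] using smul_eq_zero.1 hw
  simp [hw₀]

lemma isUnit_of_span_pair_eq_syzygies (hf : f.IsHomogeneous d) (hd : d ≠ 0)
    (hsq : Squarefree f) (ha : eval a f ≠ 0)
    (hI : genResidual a f ⊓ pointIdeal a =
      Ideal.span {μ ⬝ᵥ pointForms a, ν ⬝ᵥ pointForms a})
    {c : MvPolynomial (Fin 3) K}
    (hc : (ν ⬝ᵥ pointForms a) • μ - (μ ⬝ᵥ pointForms a) • ν = c • grad f ⨯₃ pointForms a)
    (hspan : Submodule.span (MvPolynomial (Fin 3) K) {μ, ν} = syzygies (grad f)) :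
    IsUnit c := by
  obtain ⟨p, q, hpq⟩ := Submodule.mem_span_pair.1
    (hspan ▸ grad_cross_mem_syzygies (pointForms a))
  obtain ⟨w, rfl, rfl⟩ := exists_of_smul_add_smul_dotProduct_eq_zero
    (isRelPrime_of_genResidual_inf_pointIdeal_eq hf hd hsq ha hI)
    (by rw [hpq, dotProduct_comm, dot_cross_self])
  have hw : (w * c) • grad f ⨯₃ pointForms a = (1 : MvPolynomial (Fin 3) K) •
      grad f ⨯₃ pointForms a := by
    rw [mul_smul, ← hc, one_smul, ← hpq]
    module
  exact IsUnit.of_mul_eq_one_right _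
    (smul_left_injective _ (grad_cross_pointForms_ne_zero hf hd hsq ha) hw)

lemma span_pair_eq_syzygies_of_isUnit (hf : f.IsHomogeneous d) (hd : d ≠ 0)
    (hsq : Squarefree f) (ha : eval a f ≠ 0) (hμ : μ ∈ syzygies (grad f))
    (hν : ν ∈ syzygies (grad f))
    (hI : genResidual a f ⊓ pointIdeal a =
      Ideal.span {μ ⬝ᵥ pointForms a, ν ⬝ᵥ pointForms a})
    {c : MvPolynomial (Fin 3) K} (hcu : IsUnit c)
    (hc : (ν ⬝ᵥ pointForms a) • μ - (μ ⬝ᵥ pointForms a) • ν = c • grad f ⨯₃ pointForms a) :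
    Submodule.span (MvPolynomial (Fin 3) K) {μ, ν} = syzygies (grad f) := by
  set N := Submodule.span (MvPolynomial (Fin 3) K) {μ, ν}
  have hle : N ≤ syzygies (grad f) :=
    Submodule.span_le.2 (Set.insert_subset hμ (Set.singleton_subset_iff.2 hν))
  have hE : grad f ⨯₃ pointForms a ∈ N := by
    rw [← Submodule.smul_mem_iff_of_isUnit _ hcu, ← hc]
    exact Submodule.mem_span_pair.2 ⟨_, -(μ ⬝ᵥ pointForms a), by module⟩
  refine le_antisymm hle fun θ hθ => ?_
  obtain ⟨p, q, hpq⟩ := Ideal.mem_span_pair.1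
    (hI ▸ (mem_genResidual_inf_pointIdeal_iff hf hd hsq ha).2 ⟨θ, hθ, rfl⟩)
  have hsub : p • μ + q • ν ∈ N := Submodule.mem_span_pair.2 ⟨p, q, rfl⟩
  obtain ⟨w, hw⟩ := exists_eq_smul_grad_cross_pointForms hf hd hsq ha (sub_mem hθ (hle hsub))
    (by simp only [sub_dotProduct, add_dotProduct, smul_dotProduct, smul_eq_mul, hpq, sub_self])
  rw [sub_eq_iff_eq_add] at hw
  exact hw ▸ add_mem (Submodule.smul_mem _ w hE) hsub

lemma totalDegree_add_eq_of_smul_sub_smul_eq (hf : f.IsHomogeneous d) (hd : d ≠ 0)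
    (hsq : Squarefree f) (ha : eval a f ≠ 0) (hμ : ∀ k, (μ k).IsHomogeneous s)
    (hν : ∀ k, (ν k).IsHomogeneous t) {c : MvPolynomial (Fin 3) K} (hc₀ : c ≠ 0)
    (hc : (ν ⬝ᵥ pointForms a) • μ - (μ ⬝ᵥ pointForms a) • ν = c • grad f ⨯₃ pointForms a) :
    c.totalDegree + d = s + t + 1 := by
  obtain ⟨k, hk⟩ := Function.ne_iff.1 (grad_cross_pointForms_ne_zero hf hd hsq ha)
  have hhom : (c * (grad f ⨯₃ pointForms a) k).IsHomogeneous (s + t + 1) := by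
    rw [← smul_eq_mul, ← Pi.smul_apply, ← hc, Pi.sub_apply, Pi.smul_apply, Pi.smul_apply,
      smul_eq_mul, smul_eq_mul]
    refine IsHomogeneous.sub ?_ ?_
    · convert! (isHomogeneous_dotProduct_pointForms hν a).mul (hμ k) using 1
      ring
    · convert! (isHomogeneous_dotProduct_pointForms hμ a).mul (hν k) using 1
      ring
  rw [← hhom.totalDegree (mul_ne_zero hc₀ hk), totalDegree_mul_of_isDomain hc₀ hk,
    (isHomogeneous_grad_cross_pointForms hf hd k).totalDegree hk]

lemma span_pair_eq_syzygies_iff (hf : f.IsHomogeneous d) (hd : d ≠ 0)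
    (hsq : Squarefree f) (ha : eval a f ≠ 0) (hμ : μ ∈ syzygies (grad f))
    (hν : ν ∈ syzygies (grad f))
    (hI : genResidual a f ⊓ pointIdeal a =
      Ideal.span {μ ⬝ᵥ pointForms a, ν ⬝ᵥ pointForms a})
    (hμs : ∀ k, (μ k).IsHomogeneous s) (hνt : ∀ k, (ν k).IsHomogeneous t) :
    Submodule.span (MvPolynomial (Fin 3) K) {μ, ν} = syzygies (grad f) ↔ s + t + 1 = d := by
  obtain ⟨c, hc₀, hc⟩ := exists_smul_sub_smul_eq_smul_grad_cross hf hd hsq ha hμ hν hI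
  have hdeg := totalDegree_add_eq_of_smul_sub_smul_eq hf hd hsq ha hμs hνt hc₀ hc
  constructor
  · intro hspan
    have hu := isUnit_of_span_pair_eq_syzygies hf hd hsq ha hI hc hspan
    rw [(isUnit_iff_totalDegree_of_isReduced.1 hu).2] at hdeg
    lia
  · intro hst
    have hcC := totalDegree_eq_zero_iff_eq_C.1 (show c.totalDegree = 0 by lia)
    rw [hcC] at hc₀
    refine span_pair_eq_syzygies_of_isUnit hf hd hsq ha hμ hν hI ?_ hc
    rw [hcC]
    exact (isUnit_iff_ne_zero.2 fun h => hc₀ (by rw [h, C_0])).map C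

end Generators

section Freeness

variable {K : Type*} [Field K] [CharZero K] {d : ℕ} {f : MvPolynomial (Fin 3) K} {a : Fin 3 → K}

lemma exists_homogeneous_mem_syzygies (hf : f.IsHomogeneous d) (hd : d ≠ 0)
    (hsq : Squarefree f) (ha : eval a f ≠ 0) {g : MvPolynomial (Fin 3) K} {s : ℕ}
    (hg : g ∈ genResidual a f ⊓ pointIdeal a) (hgs : g.IsHomogeneous (s + 1)) :
    ∃ μ ∈ syzygies (grad f), (∀ k, (μ k).IsHomogeneous s) ∧ μ ⬝ᵥ pointForms a = g := by
  obtain ⟨θ, hθ, rfl⟩ := (mem_genResidual_inf_pointIdeal_iff hf hd hsq ha).1 hg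
  refine ⟨_, homogeneousComponent_mem_syzygies (isHomogeneous_grad hf) hθ s,
    fun k => homogeneousComponent_isHomogeneous s _, ?_⟩
  rw [← homogeneousComponent_eq_self hgs]
  simp [dotProduct, homogeneousComponent_mul_of_isHomogeneous (isHomogeneous_pointForms a _)]

lemma genResidual_inf_pointIdeal_eq_span_pair (hf : f.IsHomogeneous d) (hd : d ≠ 0)
    (hsq : Squarefree f) (ha : eval a f ≠ 0) {μ ν : Fin 3 → MvPolynomial (Fin 3) K}
    (hspan : Submodule.span (MvPolynomial (Fin 3) K) {μ, ν} = syzygies (grad f)) :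
    genResidual a f ⊓ pointIdeal a =
      Ideal.span {μ ⬝ᵥ pointForms a, ν ⬝ᵥ pointForms a} := by
  ext g
  rw [mem_genResidual_inf_pointIdeal_iff hf hd hsq ha, ← hspan, Ideal.mem_span_pair]
  simp [Submodule.mem_span_pair, add_dotProduct, smul_dotProduct]

/-- The criterion for reduced plane curves that are not cones. -/
theorem stmt_16_general (hf : f.IsHomogeneous d) (hsq : Squarefree f)
    (hcone : ∀ q, lderiv q f = 0 → q = 0) (ha : eval a f ≠ 0) :
    (jacobianIdeal f).colon (Ideal.span (Set.range X) : Ideal (MvPolynomial (Fin 3) K)) =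
        jacobianIdeal f ↔
      ∃ (g h : MvPolynomial (Fin 3) K) (e₁ e₂ : ℕ),
        g.IsHomogeneous e₁ ∧ h.IsHomogeneous e₂ ∧
        e₁ + e₂ = d + 1 ∧ 2 ≤ e₁ ∧ 2 ≤ e₂ ∧
        genResidual a f ⊓ pointIdeal a = Ideal.span {g, h} := by
  have hd := degree_ne_zero_of_lderiv_ne_zero hf hcone
  have hgrad : grad f ≠ 0 := fun h =>
    one_ne_zero (hcone 1 (by rw [← C_dotProduct_grad, h, dotProduct_zero]))
  refine colon_span_X_eq_self_iff_koszulExact.trans ⟨fun hsat => ?_, ?_⟩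
  · obtain ⟨μ, ν, s, t, hμs, hνt, hspan⟩ :=
      exists_homogeneous_pair_span_eq_syzygies (isHomogeneous_grad hf) hgrad hsat
    have hμ : μ ∈ syzygies (grad f) := hspan ▸ Submodule.subset_span (by simp)
    have hν : ν ∈ syzygies (grad f) := hspan ▸ Submodule.subset_span (by simp)
    have hI := genResidual_inf_pointIdeal_eq_span_pair hf hd hsq ha hspan
    have hst := (span_pair_eq_syzygies_iff hf hd hsq ha hμ hν hI hμs hνt).1 hspan
    have hli := linearIndependent_of_genResidual_inf_pointIdeal_eq hf hd hsq ha hμ hν hI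
    have hs := pos_of_isHomogeneous_of_mem_syzygies hcone hμ (hli.ne_zero 0) hμs
    have ht := pos_of_isHomogeneous_of_mem_syzygies hcone hν (hli.ne_zero 1) hνt
    exact ⟨_, _, s + 1, t + 1, isHomogeneous_dotProduct_pointForms hμs a,
      isHomogeneous_dotProduct_pointForms hνt a, by lia, by lia, by lia, hI⟩
  · rintro ⟨g, h, e₁, e₂, hg, hh, hsum, he₁, he₂, hI⟩
    obtain ⟨s, rfl⟩ := Nat.exists_eq_add_of_le' (one_le_two.trans he₁)
    obtain ⟨t, rfl⟩ := Nat.exists_eq_add_of_le' (one_le_two.trans he₂)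
    obtain ⟨μ, hμ, hμs, rfl⟩ := exists_homogeneous_mem_syzygies hf hd hsq ha
      (hI ▸ Ideal.subset_span (by simp)) hg
    obtain ⟨ν, hν, hνt, rfl⟩ := exists_homogeneous_mem_syzygies hf hd hsq ha
      (hI ▸ Ideal.subset_span (by simp)) hh
    exact koszulExact_X.of_span_pair
      (linearIndependent_of_genResidual_inf_pointIdeal_eq hf hd hsq ha hμ hν hI)
      ((span_pair_eq_syzygies_iff hf hd hsq ha hμ hν hI hμs hνt).2 (by lia))

end Freeness

section Arrangements

variable {σ K : Type*} [Field K]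

lemma isRelPrime_of_isHomogeneous_one {g h : MvPolynomial σ K} (hg : g.IsHomogeneous 1)
    (hh : h.IsHomogeneous 1) (hg₀ : g ≠ 0) (hh₀ : h ≠ 0) (hgh : ∀ c : K, h ≠ c • g) :
    IsRelPrime g h := by
  rw [(irreducible_of_isHomogeneous_one_s16 hg hg₀).isRelPrime_iff_not_dvd]
  rintro ⟨r, rfl⟩
  have hr := right_ne_zero_of_mul hh₀
  have hdeg := hh.totalDegree hh₀
  rw [totalDegree_mul_of_isDomain hg₀ hr, hg.totalDegree hg₀, Nat.add_eq_left,
    totalDegree_eq_zero_iff_eq_C] at hdeg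
  exact hgh (coeff 0 r) (by rw [smul_eq_C_mul, ← hdeg, mul_comm])

lemma squarefree_prod_of_isHomogeneous_one {ι : Type*} [Fintype ι] {L : ι → MvPolynomial σ K}
    (hhom : ∀ i, (L i).IsHomogeneous 1) (hne : ∀ i, L i ≠ 0)
    (hprop : ∀ i j, i ≠ j → ∀ c : K, L i ≠ c • L j) : Squarefree (∏ i, L i) :=
  Finset.squarefree_prod_of_pairwise_isCoprime
    (fun i _ j _ hij => isRelPrime_of_isHomogeneous_one (hhom i) (hhom j) (hne i) (hne j)
      (hprop j i hij.symm))
    fun i _ => (irreducible_of_isHomogeneous_one_s16 (hhom i) (hne i)).squarefree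

lemma eval_eq_zero_of_dvd_of_lderiv_eq_zero {m : ℕ} {f h : MvPolynomial (Fin m) K}
    (hf : Squarefree f) (hh : h.IsHomogeneous 1) (hh₀ : h ≠ 0) (hhf : h ∣ f) {q : Fin m → K}
    (hq : lderiv q f = 0) : eval q h = 0 := by
  have hirr := irreducible_of_isHomogeneous_one_s16 hh hh₀
  have hdvd := dvd_lderiv_self hirr hf hhf (hq ▸ dvd_zero h)
  rw [lderiv_of_isHomogeneous_one hh] at hdvd
  by_contra hne
  exact hirr.not_isUnit (isUnit_of_dvd_unit hdvd ((isUnit_iff_ne_zero.2 hne).map C))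

end Arrangements

/-- **freeness criterion for line arrangements.**  Let `K` have
characteristic zero and let `A` be a set of `d ≥ 3` distinct lines of `ℙ²` that are not
all concurrent, given by pairwise non-proportional linear forms `L i` with
`f_A = Π L i ∈ S = K[x₀,x₁,x₂]`.  Let `ℓ` be a general linear form with dual point
`Q = ℓ∨`, let `r_A = (f_A, ∂f_A/∂ℓ) : Jac(f_A)`, and set `I := r_A ∩ I_Q`.  Then the
following are equivalent:
(a) `A` is free, i.e. `Jac(f_A)` is saturated (`Jac(f_A) : (x₀,x₁,x₂) = Jac(f_A)`);
(b) `I` is generated by two homogeneous polynomials of degrees `a` and `b` with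
`a + b = d + 1` and `a, b ≥ 2`. -/
theorem stmt_16 {K : Type*} [Field K] [CharZero K] {d : ℕ} (hd : 3 ≤ d)
    (L : Fin d → MvPolynomial (Fin 3) K)
    (hhom : ∀ i, (L i).IsHomogeneous 1) (hne : ∀ i, L i ≠ 0)
    (hprop : ∀ i j, i ≠ j → ∀ c : K, L i ≠ c • L j)
    (hnotconc : ¬ ∃ q : Fin 3 → K, q ≠ 0 ∧ ∀ i, eval q (L i) = 0) :
    ∃ p : MvPolynomial (Fin 3) K, p ≠ 0 ∧
      ∀ a : Fin 3 → K, eval a p ≠ 0 →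
        ((jacobianIdeal (∏ i, L i)).colon
            (Ideal.span (Set.range X) : Ideal (MvPolynomial (Fin 3) K)) =
          jacobianIdeal (∏ i, L i) ↔
        ∃ (g h : MvPolynomial (Fin 3) K) (e₁ e₂ : ℕ),
          g.IsHomogeneous e₁ ∧ h.IsHomogeneous e₂ ∧
          e₁ + e₂ = d + 1 ∧ 2 ≤ e₁ ∧ 2 ≤ e₂ ∧
          genResidual a (∏ i, L i) ⊓ pointIdeal a = Ideal.span {g, h}) := by
  have hsq := squarefree_prod_of_isHomogeneous_one hhom hne hprop
  have hcone (q : Fin 3 → K) (hq : lderiv q (∏ i, L i) = 0) : q = 0 := by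
    by_contra hq₀
    exact hnotconc ⟨q, hq₀, fun i => eval_eq_zero_of_dvd_of_lderiv_eq_zero hsq (hhom i) (hne i)
      (Finset.dvd_prod_of_mem L (Finset.mem_univ i)) hq⟩
  have hdeg : (∏ i, L i).IsHomogeneous d := by
    simpa using IsHomogeneous.prod Finset.univ L (fun _ => 1) fun i _ => hhom i
  exact ⟨_, hsq.ne_zero, fun _ => stmt_16_general hdeg hsq hcone⟩
end
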